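/- arXiv:2505.20351 — 7 statements merged into one kernel-verified Lean document; each statement's English description precedes it below -/
import Mathlib

section
/- Let p_x, p_y ∈ (0,1), p = p_x/p_y, σ > 0, α ∈ (0,1), and z = Φ⁻¹(1 − α/2). Let n_x(k) and n_y(k) be sequences of positive integers tending to infinity. For each k, let X_k ~ Bin(n_x(k), p_x) and Y_k ~ Bin(n_y(k), p_y), and let L_{x,k}, L_{y,k} be Gaussian N(0, σ²) random variables, the four variables being mutually independent. Set X̃_k = X_k + L_{x,k}, Ỹ_k = Y_k + L_{y,k}, p̃_k = (X̃_k/n_x(k))/(Ỹ_k/n_y(k)), and Ṽ_k = p̃_k · √(1/X̃_k − 1/n_x(k) + 1/Ỹ_k − 1/n_y(k) + σ²·(1/X̃_k² + 1/Ỹ_k²)). Then P(|p̃_k − p| ≤ z·Ṽ_k) → 1 − α as k → ∞; that is, the conservative confidence interval accounting for the Gaussian perturbation variance is asymptotically valid. -/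
open MeasureTheory ProbabilityTheory Filter

/-- The binomial distribution `Bin(n, p)` as a measure on `ℝ`
(the law of the number of successes in `n` independent trials with success probability `p`). -/
noncomputable def binomialReal (n : ℕ) (p : ℝ) (hp : p ≤ 1) : Measure ℝ :=
  ((PMF.binomial (Real.toNNReal p) (Real.toNNReal_le_one.mpr hp) n).toMeasure).map
    (fun i : Fin (n + 1) => ((i : ℕ) : ℝ))

/-!
Dividing `p̃ - p` by `p_x / (Ỹ / n_y)` turns it into `X̃ / (n_x p_x) - Ỹ / (n_y p_y)`, which is
linear in the z-scores of the two perturbed counts. Over the delta-method scale `√(v_x + v_y)`,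
where `v = (1 - p) / (p n)`, its two coefficients lie on the unit circle, so rotation invariance of
the Gaussian makes it asymptotically standard normal however `n_x` and `n_y` compare. The noise has
a fixed law, so it is negligible both in the z-scores, on the scale `√n`, and in the estimated
variance; the latter over `v_x + v_y` is a mediant of two ratios tending to `1` in probability, and
Slutsky's theorem concludes.
-/

open scoped Topology

section ConvergenceInMeasure

variable {ι Ω E F : Type*} {mΩ : MeasurableSpace Ω} {μ : Measure Ω} {l : Filter ι}

lemma tendstoInMeasure_prodMk [PseudoEMetricSpace E] [PseudoEMetricSpace F]
    {f : ι → Ω → E} {f' : Ω → E} {g : ι → Ω → F} {g' : Ω → F}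
    (hf : TendstoInMeasure μ f l f') (hg : TendstoInMeasure μ g l g') :
    TendstoInMeasure μ (fun i ω ↦ (f i ω, g i ω)) l (fun ω ↦ (f' ω, g' ω)) := by
  intro ε hε
  refine tendsto_of_tendsto_of_tendsto_of_le_of_le tendsto_const_nhds
    (by simpa only [add_zero] using (hf ε hε).add (hg ε hε)) (fun _ ↦ zero_le) fun i ↦ ?_
  refine (measure_mono fun ω hω ↦ ?_).trans (measure_union_le _ _)
  simpa only [Prod.edist_eq, Set.mem_ofPred_eq, Set.mem_union, le_max_iff] using hω

lemma tendstoInMeasure_const_of_continuousAt [PseudoEMetricSpace E] [PseudoEMetricSpace F]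
    {f : ι → Ω → E} {c : E} {g : E → F} (hg : ContinuousAt g c)
    (hf : TendstoInMeasure μ f l (fun _ ↦ c)) :
    TendstoInMeasure μ (fun i ω ↦ g (f i ω)) l (fun _ ↦ g c) := by
  intro ε hε
  obtain ⟨δ, hδ, hgδ⟩ := EMetric.tendsto_nhds_nhds.1 hg ε hε
  refine tendsto_of_tendsto_of_tendsto_of_le_of_le tendsto_const_nhds (hf δ hδ)
    (fun _ ↦ zero_le) fun i ↦ measure_mono fun ω hω ↦ ?_
  by_contra hlt
  exact (hgδ (not_le.1 hlt)).not_ge hω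

lemma tendstoInMeasure_const_of_tendsto [PseudoEMetricSpace E] {c : ι → E} {c₀ : E}
    (hc : Tendsto c l (𝓝 c₀)) : TendstoInMeasure μ (fun i _ ↦ c i) l (fun _ ↦ c₀) := by
  intro ε hε
  refine tendsto_const_nhds.congr' ?_
  filter_upwards [EMetric.tendsto_nhds.1 hc ε hε] with i hi
  simp only [not_le.2 hi, Set.ofPred_false, measure_empty]

lemma tendstoInMeasure_add_div_add {f g : ι → Ω → ℝ} {v w : ι → ℝ}
    (hv : ∀ i, 0 < v i) (hw : ∀ i, 0 < w i) {c : ℝ}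
    (hf : TendstoInMeasure μ (fun i ω ↦ f i ω / v i) l (fun _ ↦ c))
    (hg : TendstoInMeasure μ (fun i ω ↦ g i ω / w i) l (fun _ ↦ c)) :
    TendstoInMeasure μ (fun i ω ↦ (f i ω + g i ω) / (v i + w i)) l (fun _ ↦ c) := by
  rw [tendstoInMeasure_iff_dist] at *
  intro ε hε
  refine tendsto_of_tendsto_of_tendsto_of_le_of_le tendsto_const_nhds
    (by simpa only [add_zero] using (hf ε hε).add (hg ε hε)) (fun _ ↦ zero_le) fun i ↦ ?_
  refine (measure_mono fun ω hω ↦ ?_).trans (measure_union_le _ _)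
  have hvi := hv i
  have hwi := hw i
  by_contra hout
  simp only [Set.mem_union, Set.mem_ofPred_eq, not_or, not_le] at hout
  have hmediant : (f i ω + g i ω) / (v i + w i) =
      (v i / (v i + w i)) • (f i ω / v i) + (w i / (v i + w i)) • (g i ω / w i) := by
    simp only [smul_eq_mul]
    field_simp
  have hball := convex_ball c ε hout.1 hout.2
    (by positivity : 0 ≤ v i / (v i + w i)) (by positivity : 0 ≤ w i / (v i + w i))
    (by field_simp)
  rw [← hmediant] at hball
  exact (Metric.mem_ball.1 hball).not_ge hω

lemma tendsto_measureReal_of_iff_of_notMem [IsFiniteMeasure μ] {S T N : ι → Set Ω} {c : ℝ}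
    (hN : Tendsto (fun i ↦ μ.real (N i)) l (𝓝 0))
    (hST : ∀ i, ∀ ω ∉ N i, (ω ∈ S i ↔ ω ∈ T i))
    (hT : Tendsto (fun i ↦ μ.real (T i)) l (𝓝 c)) :
    Tendsto (fun i ↦ μ.real (S i)) l (𝓝 c) := by
  refine tendsto_of_tendsto_of_tendsto_of_le_of_le (by simpa using hT.sub hN)
    (by simpa using hT.add hN) (fun i ↦ ?_) fun i ↦ ?_
  · rw [sub_le_iff_le_add]
    refine (measureReal_mono fun ω hω ↦ ?_).trans (measureReal_union_le _ _)
    by_cases h : ω ∈ N i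
    exacts [.inr h, .inl ((hST i ω h).2 hω)]
  · refine (measureReal_mono fun ω hω ↦ ?_).trans (measureReal_union_le _ _)
    by_cases h : ω ∈ N i
    exacts [.inr h, .inl ((hST i ω h).1 hω)]

end ConvergenceInMeasure

section ConvergenceInDistribution

variable {ι Ω Ω' Ω'' E F : Type*} {mΩ : MeasurableSpace Ω} {P : Measure Ω} [IsProbabilityMeasure P]
  {mΩ' : MeasurableSpace Ω'} {μ : Measure Ω'} [IsProbabilityMeasure μ]
  {mΩ'' : MeasurableSpace Ω''} {ν : Measure Ω''} [IsProbabilityMeasure ν] {l : Filter ι}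

lemma tendstoInMeasure_of_tendstoInDistribution_const [PseudoMetricSpace E] [MeasurableSpace E]
    [BorelSpace E] {X : ι → Ω → E} {c : E}
    (hX : TendstoInDistribution X l (fun _ : Ω' ↦ c) (fun _ ↦ P) μ) :
    TendstoInMeasure P X l (fun _ ↦ c) := by
  rw [tendstoInMeasure_iff_dist]
  intro ε hε
  have hclosed : IsClosed {x : E | ε ≤ dist x c} :=
    isClosed_le continuous_const (continuous_id.dist continuous_const)
  have hnull : (μ.map fun _ ↦ c) {x : E | ε ≤ dist x c} = 0 := by
    rw [Measure.map_apply measurable_const hclosed.measurableSet]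
    simp [hε.not_ge]
  have hlim := ProbabilityMeasure.tendsto_measure_of_null_frontier_of_tendsto' hX.tendsto
    (measure_mono_null hclosed.frontier_subset hnull)
  simp only [ProbabilityMeasure.coe_mk, hnull] at hlim
  refine hlim.congr fun i ↦ ?_
  rw [Measure.map_apply_of_aemeasurable (hX.forall_aemeasurable i) hclosed.measurableSet]
  rfl

lemma tendstoInMeasure_mul_of_tendstoInDistribution [l.IsCountablyGenerated] {X : ι → Ω → ℝ}
    {Z : Ω' → ℝ} (hX : TendstoInDistribution X l Z (fun _ ↦ P) μ) {c : ι → ℝ}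
    (hc : Tendsto c l (𝓝 0)) :
    TendstoInMeasure P (fun i ω ↦ c i * X i ω) l (fun _ ↦ 0) := by
  refine tendstoInMeasure_of_tendstoInDistribution_const (μ := μ) ?_
  simpa only [zero_mul] using hX.continuous_comp_prodMk_of_tendstoInMeasure_const
    (g := fun x : ℝ × ℝ ↦ x.2 * x.1) (by fun_prop) (tendstoInMeasure_const_of_tendsto hc)
    (fun _ ↦ aemeasurable_const)

lemma tendstoInDistribution_prodMk_of_indepFun
    [TopologicalSpace E] [SecondCountableTopology E] [TopologicalSpace.PseudoMetrizableSpace E]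
    [MeasurableSpace E] [BorelSpace E]
    [TopologicalSpace F] [SecondCountableTopology F] [TopologicalSpace.PseudoMetrizableSpace F]
    [MeasurableSpace F] [BorelSpace F]
    {X : ι → Ω → E} {Y : ι → Ω → F} {Z : Ω' → E} {W : Ω'' → F}
    (hX : TendstoInDistribution X l Z (fun _ ↦ P) μ)
    (hY : TendstoInDistribution Y l W (fun _ ↦ P) ν)
    (hXY : ∀ i, IndepFun (X i) (Y i) P) :
    TendstoInDistribution (fun i ω ↦ (X i ω, Y i ω)) l (Prod.map Z W) (fun _ ↦ P) (μ.prod ν) where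
  forall_aemeasurable i := (hX.forall_aemeasurable i).prodMk (hY.forall_aemeasurable i)
  aemeasurable_limit := hX.aemeasurable_limit.comp_fst.prodMk hY.aemeasurable_limit.comp_snd
  tendsto := by
    have hlaw : ∀ i, P.map (fun ω ↦ (X i ω, Y i ω)) = (P.map (X i)).prod (P.map (Y i)) := fun i ↦
      (indepFun_iff_map_prod_eq_prod_map_map (hX.forall_aemeasurable i)
        (hY.forall_aemeasurable i)).1 (hXY i)
    have hlimit : (μ.prod ν).map (Prod.map Z W) = (μ.map Z).prod (ν.map W) :=
      ((indepFun_iff_hasLaw_prodMk_prod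
        (HasLaw.fun_comp ⟨hX.aemeasurable_limit, rfl⟩ measurePreserving_fst.hasLaw)
        (HasLaw.fun_comp ⟨hY.aemeasurable_limit, rfl⟩ measurePreserving_snd.hasLaw)).1
          (indepFun_prod₀ hX.aemeasurable_limit hY.aemeasurable_limit)).map_eq
    simp only [hlaw, hlimit]
    exact ((ProbabilityMeasure.continuous_prod (α := E) (β := F)).tendsto _).comp
      (hX.tendsto.prodMk_nhds hY.tendsto)

lemma tendsto_measureReal_abs_le_mul [l.IsCountablyGenerated] {T Q : ι → Ω → ℝ} {μ : Measure ℝ}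
    [IsProbabilityMeasure μ] [NullSingletonClass μ]
    (hT : TendstoInDistribution T l id (fun _ ↦ P) μ)
    (hQ : TendstoInMeasure P Q l (fun _ ↦ 1)) (hQm : ∀ i, AEMeasurable (Q i) P) (z : ℝ) :
    Tendsto (fun i ↦ P.real {ω | |T i ω| ≤ z * Q i ω}) l (𝓝 (μ.real {x | |x| ≤ z})) := by
  have hdiff : TendstoInDistribution (fun i ω ↦ |T i ω| - z * Q i ω) l (fun x ↦ |x| - z)
      (fun _ ↦ P) μ := by
    simpa only [mul_one, id] using hT.continuous_comp_prodMk_of_tendstoInMeasure_const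
      (g := fun x : ℝ × ℝ ↦ |x.1| - z * x.2) (by fun_prop) hQ hQm
  have hnull : (μ.map fun x ↦ |x| - z) (frontier (Set.Iic 0)) = 0 := by
    rw [frontier_Iic, Measure.map_apply (by fun_prop) (measurableSet_singleton 0)]
    refine measure_mono_null (t := {z, -z}) (fun x hx ↦ ?_) (Set.Finite.measure_zero (by simp) _)
    exact eq_or_eq_neg_of_abs_eq (sub_eq_zero.1 hx)
  have hlim :=
    ProbabilityMeasure.tendsto_measure_of_null_frontier_of_tendsto' hdiff.tendsto hnull
  simp only [ProbabilityMeasure.coe_mk, Measure.map_apply_of_aemeasurable hdiff.aemeasurable_limit,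
    Measure.map_apply_of_aemeasurable (hdiff.forall_aemeasurable _), measurableSet_Iic,
    Set.preimage, Set.mem_Iic, sub_nonpos] at hlim
  exact (ENNReal.tendsto_toReal (measure_ne_top μ _)).comp hlim

end ConvergenceInDistribution

section Gaussian

lemma cdf_gaussianReal_zero_neg {v : NNReal} (hv : v ≠ 0) (x : ℝ) :
    cdf (gaussianReal 0 v) (-x) = 1 - cdf (gaussianReal 0 v) x := by
  have : NullSingletonClass (gaussianReal 0 v) := nullSingletonClass_gaussianReal hv
  have hsymm : (gaussianReal 0 v).map (fun y ↦ -y) = gaussianReal 0 v := by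
    rw [gaussianReal_map_neg, neg_zero]
  calc cdf (gaussianReal 0 v) (-x)
      = (gaussianReal 0 v).real (Set.Ici x) := by
        rw [cdf_eq_real]
        conv_lhs => rw [← hsymm]
        rw [map_measureReal_apply measurable_neg measurableSet_Iic]
        simp
    _ = (gaussianReal 0 v).real (Set.Iic x)ᶜ := by
        rw [Set.compl_Iic, measureReal_congr Ioi_ae_eq_Ici]
    _ = 1 - cdf (gaussianReal 0 v) x := by
        rw [probReal_compl_eq_one_sub measurableSet_Iic, cdf_eq_real]

lemma gaussianReal_zero_real_abs_le {v : NNReal} (hv : v ≠ 0) {z : ℝ} (hz : 0 ≤ z) :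
    (gaussianReal 0 v).real {x | |x| ≤ z} = 2 * cdf (gaussianReal 0 v) z - 1 := by
  have : NullSingletonClass (gaussianReal 0 v) := nullSingletonClass_gaussianReal hv
  calc (gaussianReal 0 v).real {x | |x| ≤ z}
      = (gaussianReal 0 v).real (Set.Iic z \ Set.Iic (-z)) := by
        rw [Set.Iic_sdiff_Iic, measureReal_congr Ioc_ae_eq_Icc]
        simp only [abs_le, Set.Icc_def]
    _ = cdf (gaussianReal 0 v) z - cdf (gaussianReal 0 v) (-z) := by
        rw [measureReal_sdiff (Set.Iic_subset_Iic.2 (neg_le_self hz)) measurableSet_Iic,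
          cdf_eq_real, cdf_eq_real]
    _ = 2 * cdf (gaussianReal 0 v) z - 1 := by
        rw [cdf_gaussianReal_zero_neg hv]
        ring

lemma pos_of_half_lt_cdf_gaussianReal_zero {v : NNReal} (hv : v ≠ 0) {z : ℝ}
    (hz : 1 / 2 < cdf (gaussianReal 0 v) z) : 0 < z := by
  by_contra! hneg
  have hmono := monotone_cdf (gaussianReal 0 v) (hneg.trans (neg_nonneg.2 hneg))
  rw [cdf_gaussianReal_zero_neg hv] at hmono
  linarith

lemma hasLaw_mul_add_mul_prod_gaussianReal_zero {v : NNReal} {a b : ℝ}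
    (hab : a ^ 2 + b ^ 2 = 1) :
    HasLaw (fun x : ℝ × ℝ ↦ a * x.1 + b * x.2) (gaussianReal 0 v)
      ((gaussianReal 0 v).prod (gaussianReal 0 v)) := by
  have hindep : IndepFun (fun x : ℝ × ℝ ↦ a * x.1) (fun x ↦ b * x.2)
      ((gaussianReal 0 v).prod (gaussianReal 0 v)) :=
    indepFun_prod (X := (a * ·)) (Y := (b * ·)) (by fun_prop) (by fun_prop)
  have hsum := hindep.hasLaw_fun_add (gaussianReal_const_mul measurePreserving_fst.hasLaw a)
    (gaussianReal_const_mul measurePreserving_snd.hasLaw b)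
  have hvar : NNReal.mk (a ^ 2) (sq_nonneg a) * v + NNReal.mk (b ^ 2) (sq_nonneg b) * v = v := by
    ext
    simp [← add_mul, hab]
  simpa only [gaussianReal_conv_gaussianReal, mul_zero, add_zero, hvar] using hsum

lemma tendstoInDistribution_mul_add_mul {Ω : Type*} {mΩ : MeasurableSpace Ω} {P : Measure Ω}
    [IsProbabilityMeasure P] {v : NNReal} {X Y : ℕ → Ω → ℝ}
    (hXY : TendstoInDistribution (fun k ω ↦ (X k ω, Y k ω)) atTop id (fun _ ↦ P)
      ((gaussianReal 0 v).prod (gaussianReal 0 v)))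
    {a b : ℕ → ℝ} (hab : ∀ k, a k ^ 2 + b k ^ 2 = 1) :
    TendstoInDistribution (fun k ω ↦ a k * X k ω + b k * Y k ω) atTop id (fun _ ↦ P)
      (gaussianReal 0 v) where
  forall_aemeasurable k := by
    have := hXY.forall_aemeasurable k
    exact ((this.fst).const_mul _).add ((this.snd).const_mul _)
  tendsto := by
    -- the coefficients need not converge, but by compactness they do along subsequences, and the
    -- limit law does not depend on the subsequence
    refine tendsto_of_subseq_tendsto fun ns hns ↦ ?_
    have hbox : ∀ k, (a (ns k), b (ns k)) ∈ Set.Icc (-1 : ℝ) 1 ×ˢ Set.Icc (-1 : ℝ) 1 := fun k ↦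
      ⟨abs_le.1 (abs_le_one_iff_mul_self_le_one.2 (by nlinarith [hab (ns k)])),
        abs_le.1 (abs_le_one_iff_mul_self_le_one.2 (by nlinarith [hab (ns k)]))⟩
    obtain ⟨⟨a₀, b₀⟩, -, ms, hms, hlim⟩ :=
      (isCompact_Icc.prod isCompact_Icc).tendsto_subseq hbox
    have hab₀ : a₀ ^ 2 + b₀ ^ 2 = 1 :=
      tendsto_nhds_unique ((hlim.fst_nhds.pow 2).add (hlim.snd_nhds.pow 2))
        (tendsto_const_nhds.congr fun k ↦ (hab (ns (ms k))).symm)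
    have hsub : TendstoInDistribution (fun k ω ↦ (X (ns (ms k)) ω, Y (ns (ms k)) ω)) atTop id
        (fun _ ↦ P) ((gaussianReal 0 v).prod (gaussianReal 0 v)) :=
      ⟨fun _ ↦ hXY.forall_aemeasurable _, hXY.aemeasurable_limit,
        hXY.tendsto.comp (hns.comp hms.tendsto_atTop)⟩
    have hslutsky := hsub.continuous_comp_prodMk_of_tendstoInMeasure_const
      (g := fun x : (ℝ × ℝ) × (ℝ × ℝ) ↦ x.2.1 * x.1.1 + x.2.2 * x.1.2) (by fun_prop)
      (tendstoInMeasure_const_of_tendsto hlim) (fun _ ↦ aemeasurable_const)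
    refine ⟨ms, ?_⟩
    convert! hslutsky.tendsto using 2
    refine congrArg _ (Subtype.ext ?_)
    exact Measure.map_id.trans (hasLaw_mul_add_mul_prod_gaussianReal_zero hab₀).map_eq.symm

end Gaussian

section CentralLimitTheorem

variable {Ω : Type*} {mΩ : MeasurableSpace Ω} {P : Measure Ω}

lemma charFun_map_const_mul_add {f : Ω → ℝ} (hf : AEMeasurable f P) (c d t : ℝ) :
    charFun (P.map fun ω ↦ c * (f ω + d)) t =
      charFun (P.map f) (c * t) * Complex.exp (c * t * d * Complex.I) := by
  have hmap : P.map (fun ω ↦ f ω + d) = (P.map f).map (· + d) :=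
    (AEMeasurable.map_map_of_aemeasurable (g := (· + d)) (by fun_prop) hf).symm
  rw [charFun_map_mul_comp (by fun_prop), hmap, charFun_map_add_const]
  simp [mul_comm, mul_left_comm]

lemma tendstoInDistribution_standardize_of_charFun_eq_pow [IsProbabilityMeasure P]
    {ν : Measure ℝ} [IsProbabilityMeasure ν] (hν : Var[id; ν] ≠ 0)
    {n : ℕ → ℕ} (hn : Tendsto n atTop atTop) {X : ℕ → Ω → ℝ}
    (hX : ∀ k, AEMeasurable (X k) P)
    (hφ : ∀ k t, charFun (P.map (X k)) t = charFun ν t ^ n k) :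
    TendstoInDistribution (fun k ω ↦ (X k ω - n k * ν[id]) / √(n k * Var[id; ν])) atTop id
      (fun _ ↦ P) (gaussianReal 0 1) where
  forall_aemeasurable k := by
    have := hX k
    fun_prop
  tendsto := by
    refine ProbabilityMeasure.tendsto_iff_tendsto_charFun.2 fun t ↦ ?_
    set m := ν[id] with hm
    set s := √Var[id; ν]
    have hs2 : s ^ 2 = Var[id; ν] := Real.sq_sqrt (variance_nonneg _ _)
    have hint : Integrable id ν := memLp_one_iff_integrable.1 <|
      (memLp_two_of_variance_ne_zero (by fun_prop) hν).mono_exponent (by simp)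
    have hmean : ∫ x, s⁻¹ * (id x + -m) ∂ν = 0 := by
      rw [integral_const_mul, integral_add hint (integrable_const _)]
      simp [hm]
    have hvar : ∫ x, (fun x ↦ s⁻¹ * (id x + -m)) x ^ 2 ∂ν = 1 := by
      simp only [mul_pow, ← sub_eq_add_neg]
      rw [integral_const_mul, hm, ← variance_eq_integral (by fun_prop), ← hs2, inv_pow,
        inv_mul_cancel₀ (hs2 ▸ hν)]
    have hclt := (tendsto_charFun_inv_sqrt_mul_pow (P := ν) (by fun_prop) hmean hvar t).comp hn
    have hlimit : charFun ((gaussianReal 0 1).map id) t = Complex.exp (-t ^ 2 / 2) := by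
      simp [charFun_gaussianReal, neg_div]
    simp only [ProbabilityMeasure.coe_mk, hlimit]
    refine hclt.congr fun k ↦ ?_
    have hstd : ∀ ω, (X k ω - n k * m) / √(n k * Var[id; ν]) =
        (√(n k))⁻¹ * s⁻¹ * (X k ω + -(n k * m)) := fun ω ↦ by
      rw [Real.sqrt_mul (Nat.cast_nonneg _), div_eq_mul_inv, mul_inv]
      ring
    simp only [hstd, Function.comp_apply]
    rw [charFun_map_const_mul_add aemeasurable_id, charFun_map_const_mul_add (hX k), hφ k,
      Measure.map_id, mul_pow, ← Complex.exp_nat_mul]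
    push_cast
    congr 2 <;> ring_nf

end CentralLimitTheorem

section Binomial

open unitInterval

lemma charFun_bernoulliMeasure (p : I) (t : ℝ) :
    charFun (bernoulliMeasure (1 : ℝ) 0 p) t =
      p * Complex.exp (t * Complex.I) + (1 - p) := by
  rw [charFun_apply_real, integral_bernoulliMeasure]
  simp

lemma variance_id_bernoulliMeasure (p : I) :
    Var[id; bernoulliMeasure (1 : ℝ) 0 p] = p * (1 - p) := by
  rw [variance_eq_integral (by fun_prop)]
  simp only [integral_bernoulliMeasure, id, smul_eq_mul]
  ring

lemma charFun_binomialReal (n : ℕ) (p : I) (t : ℝ) :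
    charFun (binomialReal n p p.2.2) t = charFun (bernoulliMeasure (1 : ℝ) 0 p) t ^ n := by
  rw [binomialReal, charFun_apply_real, integral_map (by fun_prop) (by fun_prop),
    PMF.integral_eq_sum, charFun_bernoulliMeasure, add_pow, Finset.sum_range]
  refine Finset.sum_congr rfl fun i _ ↦ ?_
  -- the point mass at `i` unfolds definitionally
  change ((Real.toNNReal p ^ (i : ℕ) * (1 - Real.toNNReal p) ^ (n - i : ℕ) * n.choose i : NNReal) :
    ENNReal).toReal • Complex.exp (t * ((i : ℕ) : ℝ) * Complex.I) = _
  rw [ENNReal.coe_toReal, Complex.real_smul, mul_pow, ← Complex.exp_nat_mul]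
  push_cast [NNReal.coe_sub (Real.toNNReal_le_one.2 p.2.2), Real.coe_toNNReal _ p.2.1]
  ring_nf

end Binomial

section RelativeRisk

/-- The standardized count `(x − np) / √(np(1 − p))`, for a count `x` out of `n` trials with success
probability `p`. The number of trials is real so that no casts appear. -/
noncomputable def zScore (n p x : ℝ) : ℝ := (x - n * p) / √(n * (p * (1 - p)))

/-- The empirical relative risk `(x / n) / (y / m)`. -/
noncomputable def relRisk (n m x y : ℝ) : ℝ := x / n / (y / m)

/-- The conservative standard error of the empirical relative risk computed from counts perturbed by
noise of variance `σ ^ 2`. -/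
noncomputable def relRiskSE (σ n m x y : ℝ) : ℝ :=
  relRisk n m x y * √(1 / x - 1 / n + 1 / y - 1 / m + σ ^ 2 * (1 / x ^ 2 + 1 / y ^ 2))

/-- The delta-method variance of `log (X / n)` for a binomial count `X`. -/
noncomputable def logVar (p n : ℝ) : ℝ := (1 - p) / (p * n)

/-- The contribution of one perturbed count to the variance in `relRiskSE`, an estimate of
`logVar`. -/
noncomputable def noisyLogVar (σ n x : ℝ) : ℝ := 1 / x - 1 / n + σ ^ 2 * (1 / x ^ 2)

lemma relRiskSE_eq (σ n m x y : ℝ) :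
    relRiskSE σ n m x y = relRisk n m x y * √(noisyLogVar σ n x + noisyLogVar σ m y) := by
  simp only [relRiskSE, noisyLogVar]
  ring_nf

@[fun_prop]
lemma measurable_zScore (n p : ℝ) : Measurable (zScore n p) := by
  unfold zScore
  fun_prop

@[fun_prop]
lemma measurable_noisyLogVar (σ n : ℝ) : Measurable (noisyLogVar σ n) := by
  unfold noisyLogVar
  fun_prop

variable {p n : ℝ}

lemma logVar_pos (hp : p ∈ Set.Ioo (0 : ℝ) 1) (hn : 0 < n) : 0 < logVar p n :=
  div_pos (sub_pos.2 hp.2) (mul_pos hp.1 hn)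

lemma tendsto_logVar_atTop (p : ℝ) : Tendsto (logVar p) atTop (𝓝 0) := by
  have hlim : Tendsto (fun n : ℝ ↦ (1 - p) / p * n⁻¹) atTop (𝓝 0) := by
    simpa only [mul_zero] using tendsto_inv_atTop_zero.const_mul ((1 - p) / p)
  refine hlim.congr fun n ↦ ?_
  rw [logVar, ← div_div, div_eq_mul_inv _ n]

lemma div_div_eq_one_add_sqrt_logVar_mul_zScore (hp : p ∈ Set.Ioo (0 : ℝ) 1) (hn : 0 < n) (x : ℝ) :
    x / n / p = 1 + √(logVar p n) * zScore n p x := by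
  obtain ⟨hp0, hp1⟩ := hp
  have hvar : 0 < n * (p * (1 - p)) := mul_pos hn (mul_pos hp0 (sub_pos.2 hp1))
  have hsqrt : √(logVar p n) = √(n * (p * (1 - p))) / (n * p) := by
    rw [← Real.sqrt_sq (mul_pos hn hp0).le, ← Real.sqrt_div hvar.le, logVar]
    congr 1
    field_simp
  have hne := (Real.sqrt_pos.2 hvar).ne'
  rw [hsqrt, zScore]
  field_simp [hne]
  ring

lemma noisyLogVar_div_logVar (σ : ℝ) (hn : n ≠ 0) (p x : ℝ) :
    noisyLogVar σ n x / logVar p n =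
      ((x / n)⁻¹ - 1 + σ ^ 2 * n⁻¹ * ((x / n) ^ 2)⁻¹) * (p / (1 - p)) := by
  simp only [noisyLogVar, logVar]
  field_simp

lemma abs_relRisk_sub_le_iff {px py m y s : ℝ} (hpx : 0 < px) (hpy : 0 < py) (hm : 0 < m)
    (hy : 0 < y) (hs : 0 < s) (n x v z : ℝ) :
    |relRisk n m x y - px / py| ≤ z * (relRisk n m x y * √v) ↔
      |(x / n / px - y / m / py) / s| ≤ z * (x / n / px * √(v / s ^ 2)) := by
  have hscale : 0 < px / (y / m) * s := by positivity
  have hcentre : relRisk n m x y - px / py =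
      px / (y / m) * s * ((x / n / px - y / m / py) / s) := by
    rw [relRisk]
    field_simp
  have hwidth : z * (relRisk n m x y * √v) =
      px / (y / m) * s * (z * (x / n / px * √(v / s ^ 2))) := by
    rw [relRisk, Real.sqrt_div' _ (sq_nonneg s), Real.sqrt_sq hs.le]
    field_simp
  rw [hcentre, hwidth, abs_mul, abs_of_pos hscale, mul_le_mul_iff_right₀ hscale]

variable {Ω : Type*} {mΩ : MeasurableSpace Ω} {P : Measure Ω}

lemma tendstoInMeasure_div_of_zScore [IsProbabilityMeasure P] {X : ℕ → Ω → ℝ} {n : ℕ → ℝ}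
    (hp : p ∈ Set.Ioo (0 : ℝ) 1) (hn : ∀ k, 0 < n k) (hnTop : Tendsto n atTop atTop)
    {Ω' : Type*} {mΩ' : MeasurableSpace Ω'} {μ : Measure Ω'} [IsProbabilityMeasure μ] {Z : Ω' → ℝ}
    (hX : TendstoInDistribution (fun k ω ↦ zScore (n k) p (X k ω)) atTop Z (fun _ ↦ P) μ) :
    TendstoInMeasure P (fun k ω ↦ X k ω / n k) atTop (fun _ ↦ p) := by
  have hvanish := tendstoInMeasure_mul_of_tendstoInDistribution hX
    (by simpa using ((tendsto_logVar_atTop p).comp hnTop).sqrt)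
  have hlim := tendstoInMeasure_const_of_continuousAt (g := fun t ↦ (1 + t) * p) (by fun_prop)
    hvanish
  simp only [← div_div_eq_one_add_sqrt_logVar_mul_zScore hp (hn _),
    div_mul_cancel₀ _ hp.1.ne', add_zero, one_mul] at hlim
  exact hlim

lemma tendstoInMeasure_noisyLogVar_div_logVar {X : ℕ → Ω → ℝ} {n : ℕ → ℝ}
    (hp : p ∈ Set.Ioo (0 : ℝ) 1) (hn : ∀ k, 0 < n k) (hnTop : Tendsto n atTop atTop)
    (hX : TendstoInMeasure P (fun k ω ↦ X k ω / n k) atTop (fun _ ↦ p)) (σ : ℝ) :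
    TendstoInMeasure P (fun k ω ↦ noisyLogVar σ (n k) (X k ω) / logVar p (n k)) atTop
      (fun _ ↦ 1) := by
  have hp0 := hp.1.ne'
  have hp1 := (sub_pos.2 hp.2).ne'
  have hpair := tendstoInMeasure_prodMk hX
    (tendstoInMeasure_const_of_tendsto (tendsto_inv_atTop_zero.comp hnTop))
  have hcont : ContinuousAt
      (fun a : ℝ × ℝ ↦ (a.1⁻¹ - 1 + σ ^ 2 * a.2 * (a.1 ^ 2)⁻¹) * (p / (1 - p))) (p, 0) := by
    fun_prop (disch := simpa using hp0)
  convert! tendstoInMeasure_const_of_continuousAt hcont hpair using 3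
  · exact noisyLogVar_div_logVar σ (hn _).ne' p _
  · field_simp
    ring

lemma tendsto_measureReal_nonpos_of_tendstoInMeasure_div [IsFiniteMeasure P]
    {Y : ℕ → Ω → ℝ} {m : ℕ → ℝ} (hp : 0 < p) (hm : ∀ k, 0 < m k)
    (hY : TendstoInMeasure P (fun k ω ↦ Y k ω / m k) atTop (fun _ ↦ p)) :
    Tendsto (fun k ↦ P.real {ω | Y k ω ≤ 0}) atTop (𝓝 0) := by
  refine squeeze_zero (fun _ ↦ measureReal_nonneg) (fun k ↦ measureReal_mono fun ω hω ↦ ?_)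
    ((ENNReal.tendsto_toReal ENNReal.zero_ne_top).comp
      (tendstoInMeasure_iff_dist.1 hY p hp))
  have hneg : Y k ω / m k ≤ 0 := div_nonpos_of_nonpos_of_nonneg hω (hm k).le
  rw [Set.mem_ofPred_eq, dist_comm, Real.dist_eq]
  exact (le_sub_self_iff p |>.2 hneg).trans (le_abs_self _)

lemma tendstoInDistribution_div_div_sub_div_div {X Y : ℕ → Ω → ℝ} {nx ny : ℕ → ℝ} {px py : ℝ}
    [IsProbabilityMeasure P] (hpx : px ∈ Set.Ioo (0 : ℝ) 1) (hpy : py ∈ Set.Ioo (0 : ℝ) 1)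
    (hnx : ∀ k, 0 < nx k) (hny : ∀ k, 0 < ny k)
    (hXY : TendstoInDistribution
      (fun k ω ↦ (zScore (nx k) px (X k ω), zScore (ny k) py (Y k ω))) atTop id (fun _ ↦ P)
      ((gaussianReal 0 1).prod (gaussianReal 0 1))) :
    TendstoInDistribution (fun k ω ↦ (X k ω / nx k / px - Y k ω / ny k / py) /
      √(logVar px (nx k) + logVar py (ny k))) atTop id (fun _ ↦ P) (gaussianReal 0 1) := by
  let s := fun k ↦ √(logVar px (nx k) + logVar py (ny k))
  have hunit : ∀ k, (√(logVar px (nx k)) / s k) ^ 2 + (-(√(logVar py (ny k)) / s k)) ^ 2 = 1 := by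
    intro k
    have hwx := logVar_pos hpx (hnx k)
    have hwy := logVar_pos hpy (hny k)
    rw [neg_sq, div_pow, div_pow, Real.sq_sqrt hwx.le, Real.sq_sqrt hwy.le,
      Real.sq_sqrt (add_pos hwx hwy).le, ← add_div, div_self (add_pos hwx hwy).ne']
  convert! tendstoInDistribution_mul_add_mul hXY hunit using 3 with k ω
  rw [div_div_eq_one_add_sqrt_logVar_mul_zScore hpx (hnx k),
    div_div_eq_one_add_sqrt_logVar_mul_zScore hpy (hny k)]
  ring

lemma tendstoInMeasure_div_mul_sqrt_noisyLogVar {X Y : ℕ → Ω → ℝ} {nx ny : ℕ → ℝ} {px py : ℝ}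
    (hpx : px ∈ Set.Ioo (0 : ℝ) 1) (hpy : py ∈ Set.Ioo (0 : ℝ) 1)
    (hnx : ∀ k, 0 < nx k) (hny : ∀ k, 0 < ny k)
    (hnxTop : Tendsto nx atTop atTop) (hnyTop : Tendsto ny atTop atTop)
    (hX : TendstoInMeasure P (fun k ω ↦ X k ω / nx k) atTop (fun _ ↦ px))
    (hY : TendstoInMeasure P (fun k ω ↦ Y k ω / ny k) atTop (fun _ ↦ py)) (σ : ℝ) :
    TendstoInMeasure P (fun k ω ↦ X k ω / nx k / px *
      √((noisyLogVar σ (nx k) (X k ω) + noisyLogVar σ (ny k) (Y k ω)) /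
        (logVar px (nx k) + logVar py (ny k)))) atTop (fun _ ↦ 1) := by
  have hratio := tendstoInMeasure_add_div_add (fun k ↦ logVar_pos hpx (hnx k))
    (fun k ↦ logVar_pos hpy (hny k))
    (tendstoInMeasure_noisyLogVar_div_logVar hpx hnx hnxTop hX σ)
    (tendstoInMeasure_noisyLogVar_div_logVar hpy hny hnyTop hY σ)
  simpa only [div_self hpx.1.ne', Real.sqrt_one, mul_one] using
    tendstoInMeasure_const_of_continuousAt (g := fun a : ℝ × ℝ ↦ a.1 / px * √a.2) (by fun_prop)
      (tendstoInMeasure_prodMk hX hratio)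

lemma aemeasurable_of_zScore {X : Ω → ℝ} (hp : p ∈ Set.Ioo (0 : ℝ) 1) (hn : 0 < n)
    (hX : AEMeasurable (fun ω ↦ zScore n p (X ω)) P) : AEMeasurable X P := by
  have hne : √(n * (p * (1 - p))) ≠ 0 :=
    (Real.sqrt_pos.2 (mul_pos hn (mul_pos hp.1 (sub_pos.2 hp.2)))).ne'
  have hinv : X = fun ω ↦ √(n * (p * (1 - p))) * zScore n p (X ω) + n * p := by
    funext ω
    rw [zScore, mul_div_cancel₀ _ hne, sub_add_cancel]
  rw [hinv]
  fun_prop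

theorem tendsto_measureReal_abs_relRisk_sub_le_mul_relRiskSE [IsProbabilityMeasure P]
    {X Y : ℕ → Ω → ℝ} {nx ny : ℕ → ℝ} {px py α z : ℝ}
    (hpx : px ∈ Set.Ioo (0 : ℝ) 1) (hpy : py ∈ Set.Ioo (0 : ℝ) 1)
    (hα : α < 1) (hz : cdf (gaussianReal 0 1) z = 1 - α / 2)
    (hnx : ∀ k, 0 < nx k) (hny : ∀ k, 0 < ny k)
    (hnxTop : Tendsto nx atTop atTop) (hnyTop : Tendsto ny atTop atTop)
    (hXY : TendstoInDistribution
      (fun k ω ↦ (zScore (nx k) px (X k ω), zScore (ny k) py (Y k ω))) atTop id (fun _ ↦ P)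
      ((gaussianReal 0 1).prod (gaussianReal 0 1))) (σ : ℝ) :
    Tendsto (fun k ↦ P.real {ω | |relRisk (nx k) (ny k) (X k ω) (Y k ω) - px / py| ≤
      z * relRiskSE σ (nx k) (ny k) (X k ω) (Y k ω)}) atTop (𝓝 (1 - α)) := by
  have hmX k : AEMeasurable (X k) P :=
    aemeasurable_of_zScore hpx (hnx k) (hXY.forall_aemeasurable k).fst
  have hmY k : AEMeasurable (Y k) P :=
    aemeasurable_of_zScore hpy (hny k) (hXY.forall_aemeasurable k).snd
  have hpX : TendstoInMeasure P (fun k ω ↦ X k ω / nx k) atTop (fun _ ↦ px) :=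
    tendstoInMeasure_div_of_zScore hpx hnx hnxTop (Z := Prod.fst)
      (hXY.continuous_comp continuous_fst)
  have hpY : TendstoInMeasure P (fun k ω ↦ Y k ω / ny k) atTop (fun _ ↦ py) :=
    tendstoInMeasure_div_of_zScore hpy hny hnyTop (Z := Prod.snd)
      (hXY.continuous_comp continuous_snd)
  have hw k : 0 < logVar px (nx k) + logVar py (ny k) :=
    add_pos (logVar_pos hpx (hnx k)) (logVar_pos hpy (hny k))
  have : NullSingletonClass (gaussianReal 0 1) := nullSingletonClass_gaussianReal one_ne_zero
  have hcoverage := tendsto_measureReal_abs_le_mul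
    (tendstoInDistribution_div_div_sub_div_div hpx hpy hnx hny hXY)
    (tendstoInMeasure_div_mul_sqrt_noisyLogVar hpx hpy hnx hny hnxTop hnyTop hpX hpY σ)
    (fun k ↦ by have := hmX k; have := hmY k; fun_prop) z
  have hz0 : 0 < z := pos_of_half_lt_cdf_gaussianReal_zero one_ne_zero (by rw [hz]; linarith)
  rw [gaussianReal_zero_real_abs_le one_ne_zero hz0.le, hz,
    show 2 * (1 - α / 2) - 1 = 1 - α by ring] at hcoverage
  refine tendsto_measureReal_of_iff_of_notMem
    (tendsto_measureReal_nonpos_of_tendstoInMeasure_div hpy.1 hny hpY) (fun k ω hω ↦ ?_) hcoverage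
  rw [Set.mem_ofPred_eq, relRiskSE_eq,
    abs_relRisk_sub_le_iff hpx.1 hpy.1 (hny k) (not_le.1 hω) (Real.sqrt_pos.2 (hw k)),
    Real.sq_sqrt (hw k).le, Set.mem_ofPred_eq]

end RelativeRisk

section PerturbedBinomial

variable {Ω : Type*} {mΩ : MeasurableSpace Ω} {P : Measure Ω} [IsProbabilityMeasure P]

lemma tendstoInDistribution_zScore_of_hasLaw_binomialReal {p : ℝ} (hp : p ∈ Set.Ioo (0 : ℝ) 1)
    {n : ℕ → ℕ} (hn : Tendsto n atTop atTop) {X : ℕ → Ω → ℝ}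
    (hX : ∀ k, HasLaw (X k) (binomialReal (n k) p hp.2.le) P) :
    TendstoInDistribution (fun k ω ↦ zScore (n k) p (X k ω)) atTop id (fun _ ↦ P)
      (gaussianReal 0 1) := by
  let q : unitInterval := ⟨p, hp.1.le, hp.2.le⟩
  have hmean : ∫ x, id x ∂(bernoulliMeasure (1 : ℝ) 0 q) = p := by
    simp [integral_bernoulliMeasure, q]
  have hvar : Var[id; bernoulliMeasure (1 : ℝ) 0 q] = p * (1 - p) :=
    variance_id_bernoulliMeasure q
  have hclt := tendstoInDistribution_standardize_of_charFun_eq_pow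
    (hvar ▸ (mul_pos hp.1 (sub_pos.2 hp.2)).ne') hn (fun k ↦ (hX k).aemeasurable)
    (fun k t ↦ (hX k).map_eq ▸ charFun_binomialReal (n k) q t)
  simpa only [zScore, hmean, hvar] using hclt

lemma tendstoInMeasure_mul_of_hasLaw {L : ℕ → Ω → ℝ} {ν : Measure ℝ} [IsProbabilityMeasure ν]
    (hL : ∀ k, HasLaw (L k) ν P) {c : ℕ → ℝ} (hc : Tendsto c atTop (𝓝 0)) :
    TendstoInMeasure P (fun k ω ↦ c k * L k ω) atTop (fun _ ↦ 0) := by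
  refine tendstoInMeasure_mul_of_tendstoInDistribution (Z := id) (μ := ν)
    ⟨fun k ↦ (hL k).aemeasurable, aemeasurable_id, ?_⟩ hc
  simp only [fun k ↦ (hL k).map_eq, Measure.map_id]
  exact tendsto_const_nhds

lemma tendstoInDistribution_zScore_add_of_hasLaw {p : ℝ} (hp : p ∈ Set.Ioo (0 : ℝ) 1)
    {n : ℕ → ℕ} (hn : Tendsto n atTop atTop) {X L : ℕ → Ω → ℝ}
    (hX : ∀ k, HasLaw (X k) (binomialReal (n k) p hp.2.le) P)
    {ν : Measure ℝ} [IsProbabilityMeasure ν] (hL : ∀ k, HasLaw (L k) ν P) :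
    TendstoInDistribution (fun k ω ↦ zScore (n k) p (X k ω + L k ω)) atTop id (fun _ ↦ P)
      (gaussianReal 0 1) := by
  have hscale : Tendsto (fun k ↦ (√(n k * (p * (1 - p))))⁻¹) atTop (𝓝 0) :=
    (Real.tendsto_sqrt_atTop.comp ((tendsto_natCast_atTop_atTop.comp hn).atTop_mul_const
      (mul_pos hp.1 (sub_pos.2 hp.2)))).inv_tendsto_atTop
  have hsum := (tendstoInDistribution_zScore_of_hasLaw_binomialReal hp hn hX
    ).add_of_tendstoInMeasure_const (tendstoInMeasure_mul_of_hasLaw hL hscale)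
      (fun k ↦ (hL k).aemeasurable.const_mul _)
  convert! hsum using 2 with k
  · funext ω
    simp only [zScore, Pi.add_apply]
    ring
  · simp

theorem relative_risk_CI_valid_gaussian_conservative_general {px py α z : ℝ}
    (hpx : px ∈ Set.Ioo (0 : ℝ) 1) (hpy : py ∈ Set.Ioo (0 : ℝ) 1)
    (hα : α < 1) (hz : cdf (gaussianReal 0 1) z = 1 - α / 2)
    {nx ny : ℕ → ℕ} (hnx : ∀ k, 0 < nx k) (hny : ∀ k, 0 < ny k)
    (hnxTop : Tendsto nx atTop atTop) (hnyTop : Tendsto ny atTop atTop)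
    {X Y Lx Ly : ℕ → Ω → ℝ} {νx νy : Measure ℝ} [IsProbabilityMeasure νx] [IsProbabilityMeasure νy]
    (hX : ∀ k, HasLaw (X k) (binomialReal (nx k) px hpx.2.le) P)
    (hY : ∀ k, HasLaw (Y k) (binomialReal (ny k) py hpy.2.le) P)
    (hLx : ∀ k, HasLaw (Lx k) νx P) (hLy : ∀ k, HasLaw (Ly k) νy P)
    (hindep : ∀ k, IndepFun (X k + Lx k) (Y k + Ly k) P) (σ : ℝ) :
    Tendsto (fun k ↦ P.real
      {ω | |relRisk (nx k) (ny k) (X k ω + Lx k ω) (Y k ω + Ly k ω) - px / py| ≤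
        z * relRiskSE σ (nx k) (ny k) (X k ω + Lx k ω) (Y k ω + Ly k ω)}) atTop (𝓝 (1 - α)) := by
  have hzX := tendstoInDistribution_zScore_add_of_hasLaw hpx hnxTop hX hLx
  have hzY := tendstoInDistribution_zScore_add_of_hasLaw hpy hnyTop hY hLy
  exact tendsto_measureReal_abs_relRisk_sub_le_mul_relRiskSE hpx hpy hα hz
    (fun k ↦ Nat.cast_pos.2 (hnx k)) (fun k ↦ Nat.cast_pos.2 (hny k))
    (tendsto_natCast_atTop_atTop.comp hnxTop) (tendsto_natCast_atTop_atTop.comp hnyTop)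
    (tendstoInDistribution_prodMk_of_indepFun hzX hzY fun k ↦
      (hindep k).comp (measurable_zScore _ _) (measurable_zScore _ _)) σ

end PerturbedBinomial

/-- **Asymptotically valid conservative confidence interval for the relative risk with the
Gaussian mechanism.**  With `z = Φ⁻¹(1 − α/2)` and independent `N(0, σ²)` noises added
to the binomial counts, the conservative interval `p̃_k ± z·Ṽ_k`, whose width also
accounts for the Gaussian perturbation variance, has asymptotic coverage `1 − α`. -/
theorem relative_risk_CI_valid_gaussian_conservative {Ω : Type*} [MeasurableSpace Ω]
    (P : Measure Ω) [IsProbabilityMeasure P]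
    (px py σ α z : ℝ) (hpx : px ∈ Set.Ioo (0 : ℝ) 1) (hpy : py ∈ Set.Ioo (0 : ℝ) 1)
    (hσ : 0 < σ) (hα : α ∈ Set.Ioo (0 : ℝ) 1)
    (hz : cdf (gaussianReal 0 1) z = 1 - α / 2)
    (nx ny : ℕ → ℕ) (hnx : ∀ k, 0 < nx k) (hny : ∀ k, 0 < ny k)
    (hnxTop : Tendsto nx atTop atTop) (hnyTop : Tendsto ny atTop atTop)
    (X Y Lx Ly : ℕ → Ω → ℝ)
    (hmX : ∀ k, Measurable (X k)) (hmY : ∀ k, Measurable (Y k))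
    (hmLx : ∀ k, Measurable (Lx k)) (hmLy : ∀ k, Measurable (Ly k))
    (hlawX : ∀ k, Measure.map (X k) P = binomialReal (nx k) px hpx.2.le)
    (hlawY : ∀ k, Measure.map (Y k) P = binomialReal (ny k) py hpy.2.le)
    (hlawLx : ∀ k, Measure.map (Lx k) P = gaussianReal 0 (Real.toNNReal (σ ^ 2)))
    (hlawLy : ∀ k, Measure.map (Ly k) P = gaussianReal 0 (Real.toNNReal (σ ^ 2)))
    (hindep : ∀ k, iIndepFun ![X k, Y k, Lx k, Ly k] P) :
    Tendsto
      (fun k =>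
        (P {ω |
          |((X k ω + Lx k ω) / (nx k : ℝ)) / ((Y k ω + Ly k ω) / (ny k : ℝ)) - px / py| ≤
            z * (((X k ω + Lx k ω) / (nx k : ℝ)) / ((Y k ω + Ly k ω) / (ny k : ℝ)) *
              Real.sqrt (1 / (X k ω + Lx k ω) - 1 / (nx k : ℝ) +
                1 / (Y k ω + Ly k ω) - 1 / (ny k : ℝ) +
                σ ^ 2 * (1 / (X k ω + Lx k ω) ^ 2 + 1 / (Y k ω + Ly k ω) ^ 2)))}).toReal)
      atTop (nhds (1 - α)) := by
  have hperturbed : ∀ k, IndepFun (X k + Lx k) (Y k + Ly k) P := fun k ↦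
    (hindep k).indepFun_add_add (fun i ↦ by fin_cases i; exacts [hmX k, hmY k, hmLx k, hmLy k])
      0 2 1 3 (by decide) (by decide) (by decide) (by decide)
  exact relative_risk_CI_valid_gaussian_conservative_general hpx hpy hα.2 hz hnx hny hnxTop hnyTop
    (fun k ↦ ⟨(hmX k).aemeasurable, hlawX k⟩) (fun k ↦ ⟨(hmY k).aemeasurable, hlawY k⟩)
    (fun k ↦ ⟨(hmLx k).aemeasurable, hlawLx k⟩) (fun k ↦ ⟨(hmLy k).aemeasurable, hlawLy k⟩)
    hperturbed σ
end

section
/- Let n_x ≥ 1 and n_y ≥ 2 be natural numbers. Consider all quadruples of natural numbers (X, Y, X', Y') with 1 ≤ X, X' ≤ n_x and 1 ≤ Y, Y' ≤ n_y such that either (Y' = Y and |X − X'| = 1) or (X' = X and |Y − Y'| = 1). Then the maximum over all such quadruples of |X/Y − X'/Y'| equals n_x/2, attained at X = X' = n_x, Y = 1, Y' = 2. (This is the global sensitivity of the ratio statistic X/Y over frequency tables in which one count changes by one.) -/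
/-!
Two numerators in `[1, a]` at distance `1` force `a ≥ 2`, and dividing them by some `y ≥ 1` leaves
them at distance at most `1 ≤ a / 2`. A change of the denominator moves the ratio by
`x * |y - y'| / (y * y')`, and `y * y' ≥ 1 + |y - y'|` as both denominators are at least `1`: a unit
change therefore moves the ratio by at most `x / 2`, with equality for denominators `1` and `2`.
-/

theorem one_add_abs_sub_le_mul {R : Type*} [CommRing R] [LinearOrder R] [IsOrderedRing R]
    {y y' : R} (hy : 1 ≤ y) (hy' : 1 ≤ y') : 1 + |y - y'| ≤ y * y' := by
  wlog hle : y ≤ y' generalizing y y'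
  · rw [abs_sub_comm, mul_comm]
    exact this hy' hy (le_of_not_ge hle)
  have hprod : 0 ≤ (y - 1) * (y' + 1) :=
    mul_nonneg (sub_nonneg.2 hy) (add_nonneg (zero_le_one.trans hy') zero_le_one)
  calc
    1 + |y - y'| = 1 + (y' - y) := by rw [abs_sub_comm, abs_of_nonneg (sub_nonneg.2 hle)]
    _ ≤ 1 + (y' - y) + (y - 1) * (y' + 1) := le_add_of_nonneg_right hprod
    _ = y * y' := by ring

section LinearOrderedField

variable {K : Type*} [Field K] [LinearOrder K] [IsStrictOrderedRing K] {x x' y y' a : K}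

theorem abs_div_sub_div_same_le (hy : 1 ≤ |y|) : |x / y - x' / y| ≤ |x - x'| := by
  rw [← sub_div, abs_div]
  exact div_le_self (abs_nonneg _) hy

theorem abs_inv_sub_inv_le_div_one_add (hy : 1 ≤ y) (hy' : 1 ≤ y') :
    |y⁻¹ - y'⁻¹| ≤ |y - y'| / (1 + |y - y'|) := by
  have hy_pos : 0 < y := zero_lt_one.trans_le hy
  have hy'_pos : 0 < y' := zero_lt_one.trans_le hy'
  calc
    |y⁻¹ - y'⁻¹| = |y - y'| / (y * y') := by
      rw [inv_sub_inv hy_pos.ne' hy'_pos.ne', abs_div, abs_sub_comm,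
        abs_of_pos (mul_pos hy_pos hy'_pos)]
    _ ≤ |y - y'| / (1 + |y - y'|) := by
      gcongr
      exact one_add_abs_sub_le_mul hy hy'

theorem abs_div_sub_div_left_le (hy : 1 ≤ y) (hy' : 1 ≤ y') :
    |x / y - x / y'| ≤ |x| * (|y - y'| / (1 + |y - y'|)) := by
  rw [div_eq_mul_inv, div_eq_mul_inv, ← mul_sub, abs_mul]
  gcongr
  exact abs_inv_sub_inv_le_div_one_add hy hy'

theorem abs_div_sub_div_le_half_of_unit_change (hx : 1 ≤ x) (hxa : x ≤ a)
    (hx' : 1 ≤ x') (hxa' : x' ≤ a) (hy : 1 ≤ y) (hy' : 1 ≤ y')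
    (h : (y' = y ∧ |x - x'| = 1) ∨ (x' = x ∧ |y - y'| = 1)) :
    |x / y - x' / y'| ≤ a / 2 := by
  rcases h with ⟨rfl, hnum⟩ | ⟨rfl, hden⟩
  · have htwo : 2 ≤ a := by
      have hrange : |x - x'| ≤ a - 1 := abs_sub_le_of_le_of_le hx hxa hx' hxa'
      linarith
    calc
      |x / y' - x' / y'| ≤ |x - x'| := abs_div_sub_div_same_le (hy'.trans (le_abs_self y'))
      _ ≤ a / 2 := by linarith
  · calc
      |x' / y - x' / y'| ≤ |x'| * (|y - y'| / (1 + |y - y'|)) := abs_div_sub_div_left_le hy hy'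
      _ = x' / 2 := by
        rw [hden, one_add_one_eq_two, mul_one_div, abs_of_nonneg (zero_le_one.trans hx')]
      _ ≤ a / 2 := by gcongr

end LinearOrderedField

/-- **Global sensitivity of the ratio statistic.**  Over quadruples of counts
`(X, Y, X', Y')` with `1 ≤ X, X' ≤ n_x`, `1 ≤ Y, Y' ≤ n_y` in which exactly one
count changes by one, the maximum of `|X/Y − X'/Y'|` equals `n_x / 2`, attained at
`X = X' = n_x`, `Y = 1`, `Y' = 2`. -/
theorem ratio_global_sensitivity (nx ny : ℕ) (hnx : 1 ≤ nx) (hny : 2 ≤ ny) :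
    IsGreatest
      {v : ℝ | ∃ X Y X' Y' : ℕ,
        1 ≤ X ∧ X ≤ nx ∧ 1 ≤ X' ∧ X' ≤ nx ∧ 1 ≤ Y ∧ Y ≤ ny ∧ 1 ≤ Y' ∧ Y' ≤ ny ∧
        ((Y' = Y ∧ |(X : ℤ) - (X' : ℤ)| = 1) ∨ (X' = X ∧ |(Y : ℤ) - (Y' : ℤ)| = 1)) ∧
        v = |(X : ℝ) / (Y : ℝ) - (X' : ℝ) / (Y' : ℝ)|}
      ((nx : ℝ) / 2) ∧
    |(nx : ℝ) / 1 - (nx : ℝ) / 2| = (nx : ℝ) / 2 := by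
  have hattained : |(nx : ℝ) / 1 - (nx : ℝ) / 2| = (nx : ℝ) / 2 := by
    rw [div_one, sub_half, abs_of_nonneg (by positivity)]
  refine ⟨⟨?mem, ?upper⟩, hattained⟩
  case mem =>
    refine ⟨nx, 1, nx, 2, hnx, le_rfl, hnx, le_rfl, le_rfl, one_le_two.trans hny, one_le_two, hny,
      Or.inr ⟨rfl, by norm_num⟩, ?_⟩
    exact_mod_cast hattained.symm
  case upper =>
    rintro _ ⟨X, Y, X', Y', hX, hXn, hX', hXn', hY, -, hY', -, hneighbor, rfl⟩
    exact abs_div_sub_div_le_half_of_unit_change (mod_cast hX) (mod_cast hXn)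
      (mod_cast hX') (mod_cast hXn') (mod_cast hY) (mod_cast hY') (mod_cast hneighbor)
end

section
/- Let ε > 0 and let L ~ Lap(log(2)/ε). Let X, Y, X', Y' be natural numbers, all at least 1, such that either (Y' = Y and |X − X'| ≤ 1) or (X' = X and |Y − Y'| ≤ 1). Then for every Borel set E ⊆ ℝ, P((X/Y)·e^L ∈ E) ≤ e^ε · P((X'/Y')·e^L ∈ E). (This is the (ε,0)-differential-privacy guarantee of the NoisedLog mechanism, which perturbs log(X) − log(Y), whose sensitivity over such neighboring counts is at most log 2, with Laplace noise and exponentiates.) -/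
open MeasureTheory ProbabilityTheory Filter

/-- The Laplace distribution on `ℝ` with location `μ` and scale `b`,
given by the density `x ↦ (1/(2b)) * exp (-|x - μ| / b)`. -/
noncomputable def laplaceMeasure (μ b : ℝ) : Measure ℝ :=
  MeasureTheory.volume.withDensity
    fun x => ENNReal.ofReal ((1 / (2 * b)) * Real.exp (-|x - μ| / b))

/-! Since `c * exp L = exp (log c + L)`, the output is the exponential of a Laplace variable with
location `log (X / Y)`. Shifting the location of a Laplace distribution of scale `b` by `δ` changes
its density pointwise by a factor of at most `exp (|δ| / b)`, by the triangle inequality, and the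
logarithm of a count `≥ 1` moves by at most `log 2` when the count moves by at most `1`. With
`b = log 2 / ε` the factor is `exp ε`. -/

lemma measurePreserving_const_add_laplaceMeasure (c μ b : ℝ) :
    MeasurePreserving (c + ·) (laplaceMeasure μ b) (laplaceMeasure (c + μ) b) := by
  refine ⟨measurable_const_add c, Measure.ext fun s hs => ?_⟩
  have hpre : MeasurableSet ((c + ·) ⁻¹' s) := measurable_const_add c hs
  rw [Measure.map_apply (measurable_const_add c) hs, laplaceMeasure, laplaceMeasure,
    withDensity_apply _ hpre, withDensity_apply _ hs,
    ← (measurePreserving_add_left volume c).setLIntegral_comp_preimage hs (by fun_prop)]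
  simp only [add_sub_add_left_eq_sub]

lemma exp_neg_abs_sub_div_le {b : ℝ} (hb : 0 ≤ b) (μ ν x : ℝ) :
    Real.exp (-|x - μ| / b) ≤ Real.exp (|μ - ν| / b) * Real.exp (-|x - ν| / b) := by
  rw [← Real.exp_add, ← add_div]
  gcongr
  linarith [abs_sub_le x μ ν]

lemma laplaceMeasure_le_smul {b : ℝ} (hb : 0 < b) (μ ν : ℝ) :
    laplaceMeasure μ b ≤ ENNReal.ofReal (Real.exp (|μ - ν| / b)) • laplaceMeasure ν b := by
  rw [laplaceMeasure, laplaceMeasure, ← withDensity_smul' _ _ ENNReal.ofReal_ne_top]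
  refine withDensity_mono (ae_of_all _ fun x => ?_)
  rw [Pi.smul_apply, smul_eq_mul, ← ENNReal.ofReal_mul (Real.exp_nonneg _), mul_left_comm]
  refine ENNReal.ofReal_le_ofReal (mul_le_mul_of_nonneg_left ?_ (by positivity))
  exact exp_neg_abs_sub_div_le hb.le μ ν x

section ExpLaplace

variable {Ω : Type*} [MeasurableSpace Ω] {P : Measure Ω} {L : Ω → ℝ} {μ b c c' : ℝ} {E : Set ℝ}

lemma measure_mul_exp_mem_eq_laplaceMeasure (hL : HasLaw L (laplaceMeasure μ b) P) (hc : 0 < c)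
    (hE : MeasurableSet E) :
    P {ω | c * Real.exp (L ω) ∈ E} = laplaceMeasure (Real.log c + μ) b {x | Real.exp x ∈ E} := by
  have hlog : HasLaw (fun ω => Real.log c + L ω) (laplaceMeasure (Real.log c + μ) b) P :=
    (measurePreserving_const_add_laplaceMeasure (Real.log c) μ b).fun_comp_hasLaw hL
  simpa only [Real.exp_add, Real.exp_log hc] using
    hlog.measure_eq (Real.measurable_exp hE)

lemma measure_mul_exp_mem_le (hb : 0 < b) (hL : HasLaw L (laplaceMeasure μ b) P) (hc : 0 < c)
    (hc' : 0 < c') (hE : MeasurableSet E) :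
    P {ω | c * Real.exp (L ω) ∈ E} ≤
      ENNReal.ofReal (Real.exp (|Real.log c - Real.log c'| / b)) *
        P {ω | c' * Real.exp (L ω) ∈ E} := by
  rw [measure_mul_exp_mem_eq_laplaceMeasure hL hc hE,
    measure_mul_exp_mem_eq_laplaceMeasure hL hc' hE,
    ← add_sub_add_right_eq_sub (Real.log c) (Real.log c') μ]
  exact laplaceMeasure_le_smul hb _ _ _

end ExpLaplace

lemma log_sub_log_le_log_one_add_abs_sub {x y : ℝ} (hx : 0 < x) (hy : 1 ≤ y) :
    Real.log x - Real.log y ≤ Real.log (1 + |x - y|) := by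
  have hy0 : 0 < y := one_pos.trans_le hy
  rw [← Real.log_div hx.ne' hy0.ne']
  gcongr
  rw [div_le_iff₀ hy0]
  calc x ≤ y + |x - y| := by linarith [le_abs_self (x - y)]
    _ ≤ y + |x - y| * y := by gcongr; exact le_mul_of_one_le_right (abs_nonneg _) hy
    _ = (1 + |x - y|) * y := by ring

lemma abs_log_sub_log_le_log_one_add_abs_sub {x y : ℝ} (hx : 1 ≤ x) (hy : 1 ≤ y) :
    |Real.log x - Real.log y| ≤ Real.log (1 + |x - y|) := by
  refine abs_sub_le_iff.2
    ⟨log_sub_log_le_log_one_add_abs_sub (one_pos.trans_le hx) hy, ?_⟩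
  rw [abs_sub_comm x y]
  exact log_sub_log_le_log_one_add_abs_sub (one_pos.trans_le hy) hx

lemma abs_log_sub_log_le_log_two {x y : ℝ} (hx : 1 ≤ x) (hy : 1 ≤ y) (h : |x - y| ≤ 1) :
    |Real.log x - Real.log y| ≤ Real.log 2 := by
  refine (abs_log_sub_log_le_log_one_add_abs_sub hx hy).trans ?_
  gcongr
  linarith

lemma abs_log_div_sub_log_div_le_log_two {x y x' y' : ℝ} (hx : 1 ≤ x) (hy : 1 ≤ y) (hx' : 1 ≤ x')
    (hy' : 1 ≤ y') (h : (y' = y ∧ |x - x'| ≤ 1) ∨ (x' = x ∧ |y - y'| ≤ 1)) :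
    |Real.log (x / y) - Real.log (x' / y')| ≤ Real.log 2 := by
  rw [Real.log_div (by positivity) (by positivity), Real.log_div (by positivity) (by positivity)]
  rcases h with ⟨rfl, h⟩ | ⟨rfl, h⟩
  · rw [sub_sub_sub_cancel_right]
    exact abs_log_sub_log_le_log_two hx hx' h
  · rw [sub_sub_sub_cancel_left, abs_sub_comm]
    exact abs_log_sub_log_le_log_two hy hy' h

theorem noisedLog_DP_general {Ω : Type*} [MeasurableSpace Ω] {P : Measure Ω} {ε : ℝ} (hε : 0 < ε)
    {L : Ω → ℝ} (hL : HasLaw L (laplaceMeasure 0 (Real.log 2 / ε)) P) {x y x' y' : ℝ}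
    (hx : 1 ≤ x) (hy : 1 ≤ y) (hx' : 1 ≤ x') (hy' : 1 ≤ y')
    (h : (y' = y ∧ |x - x'| ≤ 1) ∨ (x' = x ∧ |y - y'| ≤ 1)) {E : Set ℝ} (hE : MeasurableSet E) :
    P {ω | x / y * Real.exp (L ω) ∈ E} ≤
      ENNReal.ofReal (Real.exp ε) * P {ω | x' / y' * Real.exp (L ω) ∈ E} := by
  have hb : 0 < Real.log 2 / ε := div_pos (Real.log_pos one_lt_two) hε
  have hloss : |Real.log (x / y) - Real.log (x' / y')| / (Real.log 2 / ε) ≤ ε := by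
    rw [div_le_iff₀ hb, mul_div_cancel₀ _ hε.ne']
    exact abs_log_div_sub_log_div_le_log_two hx hy hx' hy' h
  calc P {ω | x / y * Real.exp (L ω) ∈ E}
    _ ≤ ENNReal.ofReal (Real.exp (|Real.log (x / y) - Real.log (x' / y')| / (Real.log 2 / ε))) *
          P {ω | x' / y' * Real.exp (L ω) ∈ E} :=
        measure_mul_exp_mem_le hb hL (by positivity) (by positivity) hE
    _ ≤ ENNReal.ofReal (Real.exp ε) * P {ω | x' / y' * Real.exp (L ω) ∈ E} :=
        mul_le_mul_left (ENNReal.ofReal_le_ofReal (Real.exp_le_exp.2 hloss)) _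

/-- **(ε,0)-differential privacy of the `NoisedLog` mechanism**, which perturbs
`log X − log Y` (of sensitivity at most `log 2` over neighboring counts that stay at
least `1`) with `Lap(log 2 / ε)` noise and exponentiates, outputting `(X/Y)·e^L`. -/
theorem noisedLog_DP {Ω : Type*} [MeasurableSpace Ω]
    (P : Measure Ω) [IsProbabilityMeasure P]
    (ε : ℝ) (hε : 0 < ε) (L : Ω → ℝ) (hm : Measurable L)
    (hlaw : Measure.map L P = laplaceMeasure 0 (Real.log 2 / ε)) :
    ∀ X Y X' Y' : ℕ, 1 ≤ X → 1 ≤ Y → 1 ≤ X' → 1 ≤ Y' →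
      ((Y' = Y ∧ |(X : ℤ) - (X' : ℤ)| ≤ 1) ∨ (X' = X ∧ |(Y : ℤ) - (Y' : ℤ)| ≤ 1)) →
      ∀ E : Set ℝ, MeasurableSet E →
        P {ω | ((X : ℝ) / (Y : ℝ)) * Real.exp (L ω) ∈ E} ≤
          ENNReal.ofReal (Real.exp ε) *
            P {ω | ((X' : ℝ) / (Y' : ℝ)) * Real.exp (L ω) ∈ E} := by
  intro X Y X' Y' hX hY hX' hY' h E hE
  exact noisedLog_DP_general hε ⟨hm.aemeasurable, hlaw⟩ (mod_cast hX) (mod_cast hY)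
    (mod_cast hX') (mod_cast hY') (mod_cast h) hE
end

section
/- Let ε > 0, let X and Y be positive natural numbers, set Z = X/Y, let L ~ Lap(log(2)/ε), and set Z̃ = Z·e^L. Then for any α with 0 < α < Z, P(|Z̃ − Z| ≥ α) = (1/2)·(α/Z + 1)^{−ε/log(2)} + (1/2)·(1 − α/Z)^{ε/log(2)}; that is, the NoisedLog mechanism is (α, β)-sample accurate with β equal to this expression, which depends only on the ratio Z and not on the magnitudes of X and Y. -/
open MeasureTheory ProbabilityTheory Filter

/-! The deviation `|Z e^L - Z|` is at least `α` exactly when `e^L` lies above `α / Z + 1` or below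
`1 - α / Z`. As the tails of a Laplace variable are exponential, those of `e^L` are powers, and
the two powers are the two summands. -/

lemma laplaceMeasure_map_neg (μ b : ℝ) :
    (laplaceMeasure μ b).map Neg.neg = laplaceMeasure (-μ) b := by
  ext s hs
  rw [Measure.map_apply measurable_neg hs, laplaceMeasure, laplaceMeasure,
    withDensity_apply _ (measurable_neg hs), withDensity_apply _ hs,
    ← (Measure.measurePreserving_neg volume).setLIntegral_comp_preimage_emb
      (MeasurableEquiv.neg ℝ).measurableEmbedding _ s]
  refine setLIntegral_congr_fun (measurable_neg hs) fun x _ ↦ ?_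
  rw [← abs_neg (-x - -μ), neg_sub_neg, neg_sub, abs_sub_comm]

section LaplaceTails

variable {μ b t u : ℝ}

lemma laplaceMeasure_Iic (hb : 0 < b) (ht : t ≤ μ) :
    laplaceMeasure μ b (Set.Iic t) = ENNReal.ofReal (1 / 2 * Real.exp ((t - μ) / b)) := by
  have density_eq : ∀ x ∈ Set.Iic t, ENNReal.ofReal (1 / (2 * b) * Real.exp (-|x - μ| / b)) =
      ENNReal.ofReal (1 / (2 * b) * Real.exp (-μ / b) * Real.exp (b⁻¹ * x)) := fun x hx ↦ by
    rw [abs_of_nonpos (sub_nonpos.mpr (hx.trans ht)), mul_assoc, ← Real.exp_add]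
    ring_nf
  calc laplaceMeasure μ b (Set.Iic t)
      = ∫⁻ x in Set.Iic t,
          ENNReal.ofReal (1 / (2 * b) * Real.exp (-μ / b) * Real.exp (b⁻¹ * x)) := by
        rw [laplaceMeasure, withDensity_apply _ measurableSet_Iic,
          setLIntegral_congr_fun measurableSet_Iic density_eq]
    _ = ENNReal.ofReal (1 / (2 * b) * Real.exp (-μ / b) * (Real.exp (b⁻¹ * t) / b⁻¹)) := by
        rw [← ofReal_integral_eq_lintegral_ofReal
            ((integrableOn_exp_mul_Iic (inv_pos.mpr hb) t).const_mul _)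
            (ae_of_all _ fun x ↦ by positivity),
          integral_const_mul, integral_exp_mul_Iic (inv_pos.mpr hb)]
    _ = ENNReal.ofReal (1 / 2 * Real.exp ((t - μ) / b)) := by
        rw [show (t - μ) / b = -μ / b + b⁻¹ * t by ring, Real.exp_add]
        field_simp

lemma laplaceMeasure_Ici (hb : 0 < b) (ht : μ ≤ t) :
    laplaceMeasure μ b (Set.Ici t) = ENNReal.ofReal (1 / 2 * Real.exp (-(t - μ) / b)) := by
  rw [← neg_neg μ, ← laplaceMeasure_map_neg, Measure.map_apply measurable_neg measurableSet_Ici,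
    Set.neg_preimage, Set.neg_Ici, laplaceMeasure_Iic hb (neg_le_neg ht)]
  ring_nf

lemma laplaceMeasure_setOf_exp_le (hb : 0 < b) (hu₀ : 0 < u) (hu : u ≤ Real.exp μ) :
    laplaceMeasure μ b {x | Real.exp x ≤ u} =
      ENNReal.ofReal (1 / 2 * (u / Real.exp μ) ^ b⁻¹) := by
  have setOf_eq : {x | Real.exp x ≤ u} = Set.Iic (Real.log u) :=
    Set.ext fun x ↦ (Real.le_log_iff_exp_le hu₀).symm
  rw [setOf_eq, laplaceMeasure_Iic hb ((Real.log_le_iff_le_exp hu₀).mpr hu),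
    Real.rpow_def_of_pos (by positivity), Real.log_div hu₀.ne' (Real.exp_ne_zero μ),
    Real.log_exp, ← div_eq_mul_inv (_ - _)]

lemma laplaceMeasure_setOf_le_exp (hb : 0 < b) (hu : Real.exp μ ≤ u) :
    laplaceMeasure μ b {x | u ≤ Real.exp x} =
      ENNReal.ofReal (1 / 2 * (u / Real.exp μ) ^ (-b⁻¹)) := by
  have hu₀ : 0 < u := (Real.exp_pos μ).trans_le hu
  have setOf_eq : {x | u ≤ Real.exp x} = Set.Ici (Real.log u) :=
    Set.ext fun x ↦ (Real.log_le_iff_le_exp hu₀).symm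
  rw [setOf_eq, laplaceMeasure_Ici hb ((Real.le_log_iff_exp_le hu₀).mpr hu),
    Real.rpow_def_of_pos (by positivity), Real.log_div hu₀.ne' (Real.exp_ne_zero μ),
    Real.log_exp, neg_div, mul_neg, ← div_eq_mul_inv (_ - _)]

end LaplaceTails

lemma le_abs_mul_sub_self_iff {K : Type*} [Field K] [LinearOrder K] [IsStrictOrderedRing K]
    {Z : K} (hZ : 0 < Z) (α y : K) :
    α ≤ |Z * y - Z| ↔ α / Z + 1 ≤ y ∨ y ≤ 1 - α / Z := by
  rw [← mul_sub_one, abs_mul, abs_of_pos hZ, ← div_le_iff₀' hZ, le_abs, neg_sub,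
    le_sub_iff_add_le, le_sub_comm (c := y)]

theorem noisedLog_sample_accuracy_general {Ω : Type*} [MeasurableSpace Ω] {P : Measure Ω}
    {L : Ω → ℝ} {b Z α : ℝ} (hb : 0 < b) (hL : HasLaw L (laplaceMeasure 0 b) P)
    (hα₀ : 0 < α) (hαZ : α < Z) :
    P.real {ω | α ≤ |Z * Real.exp (L ω) - Z|} =
      1 / 2 * (α / Z + 1) ^ (-b⁻¹) + 1 / 2 * (1 - α / Z) ^ b⁻¹ := by
  have hZ : 0 < Z := hα₀.trans hαZ
  have ratio_pos : 0 < α / Z := div_pos hα₀ hZ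
  have lower_pos : 0 < 1 - α / Z := sub_pos.mpr ((div_lt_one hZ).mpr hαZ)
  have tails_disjoint :
      Disjoint {x | α / Z + 1 ≤ Real.exp x} {x | Real.exp x ≤ 1 - α / Z} :=
    Set.disjoint_left.mpr fun x (le_exp : α / Z + 1 ≤ Real.exp x)
      (exp_le : Real.exp x ≤ 1 - α / Z) ↦ by linarith
  rw [hL.measureReal_eq (p := fun x ↦ α ≤ |Z * Real.exp x - Z|)
    (measurableSet_le (by fun_prop) (by fun_prop))]
  simp only [le_abs_mul_sub_self_iff hZ, Set.ofPred_or]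
  rw [measureReal_def, measure_union tails_disjoint (measurableSet_le (by fun_prop) (by fun_prop)),
    laplaceMeasure_setOf_le_exp hb (by rw [Real.exp_zero]; linarith),
    laplaceMeasure_setOf_exp_le hb lower_pos (by rw [Real.exp_zero]; linarith),
    ← ENNReal.ofReal_add (by positivity) (by positivity), ENNReal.toReal_ofReal (by positivity),
    Real.exp_zero, div_one, div_one]

/-- **Sample accuracy of the `NoisedLog` mechanism.**  With `Z = X/Y`,
`L ~ Lap(log 2 / ε)` and `Z̃ = Z·e^L`, for `0 < α < Z` one has
`P(|Z̃ − Z| ≥ α) = (1/2)(α/Z + 1)^{−ε/log 2} + (1/2)(1 − α/Z)^{ε/log 2}`,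
an expression depending only on the ratio `Z`. -/
theorem noisedLog_sample_accuracy {Ω : Type*} [MeasurableSpace Ω]
    (P : Measure Ω) [IsProbabilityMeasure P]
    (ε : ℝ) (hε : 0 < ε) (X Y : ℕ) (hX : 0 < X) (hY : 0 < Y)
    (L : Ω → ℝ) (hm : Measurable L)
    (hlaw : Measure.map L P = laplaceMeasure 0 (Real.log 2 / ε))
    (α : ℝ) (hα0 : 0 < α) (hαZ : α < (X : ℝ) / (Y : ℝ)) :
    (P {ω | α ≤ |(X : ℝ) / (Y : ℝ) * Real.exp (L ω) - (X : ℝ) / (Y : ℝ)|}).toReal =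
      (1 / 2) * (α / ((X : ℝ) / (Y : ℝ)) + 1) ^ (-(ε / Real.log 2)) +
        (1 / 2) * (1 - α / ((X : ℝ) / (Y : ℝ))) ^ (ε / Real.log 2) := by
  have hb : 0 < Real.log 2 / ε := div_pos (Real.log_pos one_lt_two) hε
  simpa only [inv_div, measureReal_def] using
    noisedLog_sample_accuracy_general hb ⟨hm.aemeasurable, hlaw⟩ hα0 hαZ
end

section
/- Let ε > log(2), let X and Y be positive natural numbers, set Z = X/Y, and let L ~ Lap(log(2)/ε). Then E[Z·e^L] = Z/(1 − (log(2)/ε)²); equivalently, the post-processed estimator (1 − (log(2)/ε)²)·Z·e^L is an unbiased estimator of Z. -/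
open MeasureTheory ProbabilityTheory Filter

/-!
The tilted Laplace density `exp (t * x - c * |x|)` is a pure exponential on each half-line, with
rates `t + c` and `t - c`. Both halves converge when `|t| < c`, and they add up to
`1 / (c + t) + 1 / (c - t) = 2 * c / (c ^ 2 - t ^ 2)`. With `c = b⁻¹` this gives the moment
generating function of the Laplace distribution, and the bias is its value at `t = 1`.
-/

theorem eqOn_Iic_exp_mul_sub_mul_abs (c t : ℝ) :
    Set.EqOn (fun x ↦ Real.exp (t * x - c * |x|)) (fun x ↦ Real.exp ((t + c) * x)) (Set.Iic 0) := by
  intro x hx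
  beta_reduce
  rw [abs_of_nonpos hx]
  ring_nf

theorem eqOn_Ioi_exp_mul_sub_mul_abs (c t : ℝ) :
    Set.EqOn (fun x ↦ Real.exp (t * x - c * |x|)) (fun x ↦ Real.exp ((t - c) * x)) (Set.Ioi 0) := by
  intro x hx
  beta_reduce
  rw [abs_of_pos hx]
  ring_nf

theorem integral_exp_mul_sub_mul_abs {c t : ℝ} (h : |t| < c) :
    ∫ x, Real.exp (t * x - c * |x|) = 2 * c / (c ^ 2 - t ^ 2) := by
  obtain ⟨hneg, hpos⟩ := abs_lt.mp h
  have hadd : 0 < t + c := by linarith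
  have hsub : t - c < 0 := by linarith
  have hIic := eqOn_Iic_exp_mul_sub_mul_abs c t
  have hIoi := eqOn_Ioi_exp_mul_sub_mul_abs c t
  calc
    ∫ x, Real.exp (t * x - c * |x|)
    _ = (∫ x in Set.Iic 0, Real.exp (t * x - c * |x|)) +
          ∫ x in Set.Ioi 0, Real.exp (t * x - c * |x|) :=
        (intervalIntegral.integral_Iic_add_Ioi
          ((integrableOn_exp_mul_Iic hadd 0).congr_fun hIic.symm measurableSet_Iic)
          ((integrableOn_exp_mul_Ioi hsub 0).congr_fun hIoi.symm measurableSet_Ioi)).symm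
    _ = (∫ x in Set.Iic 0, Real.exp ((t + c) * x)) + ∫ x in Set.Ioi 0, Real.exp ((t - c) * x) := by
        rw [setIntegral_congr_fun measurableSet_Iic hIic,
          setIntegral_congr_fun measurableSet_Ioi hIoi]
    _ = 1 / (t + c) + -1 / (t - c) := by
        rw [integral_exp_mul_Iic hadd, integral_exp_mul_Ioi hsub, mul_zero, mul_zero, Real.exp_zero]
    _ = 2 * c / (c ^ 2 - t ^ 2) := by
        have hdiff : c ^ 2 - t ^ 2 ≠ 0 := by nlinarith
        field_simp [hadd.ne', hsub.ne]
        ring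

theorem integral_laplaceMeasure {E : Type*} [NormedAddCommGroup E] [NormedSpace ℝ E]
    {b : ℝ} (hb : 0 < b) (m : ℝ) (f : ℝ → E) :
    ∫ x, f x ∂laplaceMeasure m b =
      ∫ x, ((1 / (2 * b)) * Real.exp (-|x - m| / b)) • f x := by
  rw [laplaceMeasure, integral_withDensity_eq_integral_toReal_smul (by fun_prop)
    (Eventually.of_forall fun _ ↦ ENNReal.ofReal_lt_top)]
  congr with x
  rw [ENNReal.toReal_ofReal (by positivity)]

theorem mgf_id_laplaceMeasure {b t : ℝ} (hb : 0 < b) (ht : |t| < b⁻¹) (m : ℝ) :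
    mgf id (laplaceMeasure m b) t = Real.exp (m * t) / (1 - (b * t) ^ 2) := by
  calc
    mgf id (laplaceMeasure m b) t
    _ = ∫ x, (1 / (2 * b)) * Real.exp (-|x - m| / b) * Real.exp (t * x) :=
        integral_laplaceMeasure hb m _
    _ = ∫ x, (1 / (2 * b)) * Real.exp (-|x| / b) * Real.exp (t * (x + m)) := by
        rw [← integral_add_right_eq_self _ m]
        simp only [add_sub_cancel_right]
    _ = ∫ x, Real.exp (m * t) / (2 * b) * Real.exp (t * x - b⁻¹ * |x|) := by
        congr with x
        rw [mul_assoc, ← Real.exp_add, div_mul_eq_mul_div, div_mul_eq_mul_div, one_mul,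
          ← Real.exp_add]
        ring_nf
    _ = Real.exp (m * t) / (2 * b) * (2 * b⁻¹ / (b⁻¹ ^ 2 - t ^ 2)) := by
        rw [integral_const_mul, integral_exp_mul_sub_mul_abs ht]
    _ = Real.exp (m * t) / (1 - (b * t) ^ 2) := by
        have hfactor : b⁻¹ ^ 2 - t ^ 2 = (1 - (b * t) ^ 2) / b ^ 2 := by field_simp
        rw [hfactor]
        field_simp

theorem noisedLog_bias_general {Ω : Type*} [MeasurableSpace Ω] {P : Measure Ω} {L : Ω → ℝ}
    {m b : ℝ} (hb : 0 < b) (hb1 : b < 1) (hL : HasLaw L (laplaceMeasure m b) P) (z : ℝ) :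
    ∫ ω, z * Real.exp (L ω) ∂P = z * Real.exp m / (1 - b ^ 2) := by
  have hrate : |(1 : ℝ)| < b⁻¹ := by rw [abs_one]; exact (one_lt_inv₀ hb).mpr hb1
  have hmgf : ∫ ω, Real.exp (L ω) ∂P = mgf id (laplaceMeasure m b) 1 := by
    rw [← hL.map_eq, mgf_id_map hL.aemeasurable]
    simp only [mgf, one_mul]
  rw [integral_const_mul, hmgf, mgf_id_laplaceMeasure hb hrate, mul_one, mul_one, mul_div_assoc]

/-- **Bias of the `NoisedLog` mechanism.**  With `Z = X/Y` and `L ~ Lap(log 2 / ε)`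
for `ε > log 2`, one has `E[Z·e^L] = Z / (1 − (log 2 / ε)²)`; equivalently, multiplying
the output `Z·e^L` by `1 − (log 2 / ε)²` yields an unbiased estimator of `Z`. -/
theorem noisedLog_bias {Ω : Type*} [MeasurableSpace Ω]
    (P : Measure Ω) [IsProbabilityMeasure P]
    (ε : ℝ) (hε : Real.log 2 < ε) (X Y : ℕ) (hX : 0 < X) (hY : 0 < Y)
    (L : Ω → ℝ) (hm : Measurable L)
    (hlaw : Measure.map L P = laplaceMeasure 0 (Real.log 2 / ε)) :
    ∫ ω, (X : ℝ) / (Y : ℝ) * Real.exp (L ω) ∂P =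
      ((X : ℝ) / (Y : ℝ)) / (1 - (Real.log 2 / ε) ^ 2) := by
  have hlog : 0 < Real.log 2 := Real.log_pos one_lt_two
  have hε0 : 0 < ε := hlog.trans hε
  simpa only [Real.exp_zero, mul_one] using noisedLog_bias_general (div_pos hlog hε0)
    ((div_lt_one hε0).mpr hε) ⟨hm.aemeasurable, hlaw⟩ ((X : ℝ) / Y)
end

section
/- Let X and Y be natural numbers with X ≥ 2 and Y ≥ 2. Then max{ |X/Y − (X+1)/Y|, |X/Y − (X−1)/Y|, |X/Y − X/(Y+1)|, |X/Y − X/(Y−1)| } = max(1/Y, X/(Y² − Y)); moreover this maximum equals 1/Y when X < Y and equals X/(Y·(Y−1)) when X ≥ Y. (This is the local sensitivity of the ratio statistic X/Y.) -/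
/-!
Changing the numerator by one moves `x / y` by `1 / y`, while changing the denominator from `y` to
`z = y ± 1` moves it by `|x| / (y * z)`, which is larger for `z = y - 1`. Over the common
denominator `y * (y - 1)` the two competing changes have numerators `y - 1` and `|x|`, so comparing
them amounts to comparing `|x| + 1` with `y`.
-/

theorem one_div_eq_sub_one_div_mul_sub_one {K : Type*} [Field K] {y : K} (hy : y ≠ 1) :
    1 / y = (y - 1) / (y * (y - 1)) := by
  rw [div_mul_cancel_right₀ (sub_ne_zero.mpr hy), one_div]

section OrderedField

variable {K : Type*} [Field K] [LinearOrder K]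

/-- The local sensitivity of the ratio `x / y`: the largest absolute change when exactly one of the
two counts changes by one. The counts are elements of a field, so that `y - 1` is not truncated; at
`y = 0, 1, -1` one of the quotients has denominator zero and takes the junk value `0`. -/
def ratioLocalSensitivity (x y : K) : K :=
  max (max |x / y - (x + 1) / y| |x / y - (x - 1) / y|)
    (max |x / y - x / (y + 1)| |x / y - x / (y - 1)|)

variable [IsStrictOrderedRing K] {y z : K}

theorem abs_div_sub_div_right (a b c : K) : |a / c - b / c| = |a - b| / |c| := by
  rw [← sub_div, abs_div]

theorem abs_div_sub_div_left (x : K) (hy : y ≠ 0) (hz : z ≠ 0) :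
    |x / y - x / z| = |x| * |y - z| / |y * z| := by
  rw [div_sub_div x x hy hz, mul_comm y x, ← mul_sub, abs_div, abs_mul, abs_sub_comm]

theorem ratioLocalSensitivity_eq_max (x : K) (hy : 1 < y) :
    ratioLocalSensitivity x y = max (1 / y) (|x| / (y * (y - 1))) := by
  have hy_pos : 0 < y := zero_lt_one.trans hy
  have hpred_pos : 0 < y - 1 := sub_pos.mpr hy
  have hsucc_pos : 0 < y + 1 := by positivity
  have num_succ : |x / y - (x + 1) / y| = 1 / y := by
    simp [abs_div_sub_div_right, abs_of_pos hy_pos]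
  have num_pred : |x / y - (x - 1) / y| = 1 / y := by
    simp [abs_div_sub_div_right, abs_of_pos hy_pos]
  have den_succ : |x / y - x / (y + 1)| = |x| / (y * (y + 1)) := by
    simp [abs_div_sub_div_left x hy_pos.ne' hsucc_pos.ne', abs_of_pos hy_pos, abs_of_pos hsucc_pos]
  have den_pred : |x / y - x / (y - 1)| = |x| / (y * (y - 1)) := by
    simp [abs_div_sub_div_left x hy_pos.ne' hpred_pos.ne', abs_of_pos hy_pos, abs_of_pos hpred_pos]
  have den_succ_le_den_pred : |x| / (y * (y + 1)) ≤ |x| / (y * (y - 1)) := by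
    gcongr
    linarith
  rw [ratioLocalSensitivity, num_succ, num_pred, den_succ, den_pred, max_self,
    max_eq_right den_succ_le_den_pred]

theorem div_mul_sub_one_le_one_div_iff {x : K} (hy : 1 < y) :
    x / (y * (y - 1)) ≤ 1 / y ↔ x + 1 ≤ y := by
  have hden : 0 < y * (y - 1) := mul_pos (zero_lt_one.trans hy) (sub_pos.mpr hy)
  rw [one_div_eq_sub_one_div_mul_sub_one hy.ne', div_le_div_iff_of_pos_right hden,
    le_sub_iff_add_le]

theorem one_div_le_div_mul_sub_one_iff {x : K} (hy : 1 < y) :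
    1 / y ≤ x / (y * (y - 1)) ↔ y ≤ x + 1 := by
  have hden : 0 < y * (y - 1) := mul_pos (zero_lt_one.trans hy) (sub_pos.mpr hy)
  rw [one_div_eq_sub_one_div_mul_sub_one hy.ne', div_le_div_iff_of_pos_right hden,
    sub_le_iff_le_add]

theorem ratio_local_sensitivity_general (x : K) (hy : 1 < y) :
    ratioLocalSensitivity x y = max (1 / y) (|x| / (y ^ 2 - y)) ∧
      (|x| + 1 ≤ y → ratioLocalSensitivity x y = 1 / y) ∧
      (y ≤ |x| + 1 → ratioLocalSensitivity x y = |x| / (y * (y - 1))) := by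
  have hsq : y ^ 2 - y = y * (y - 1) := by ring
  rw [hsq, ratioLocalSensitivity_eq_max x hy]
  exact ⟨rfl, fun h ↦ max_eq_left ((div_mul_sub_one_le_one_div_iff hy).mpr h),
    fun h ↦ max_eq_right ((one_div_le_div_mul_sub_one_iff hy).mpr h)⟩

end OrderedField

/-- **Local sensitivity of the ratio statistic `X/Y`.**  For counts `X, Y ≥ 2`, the
maximum change of `X/Y` when one of the counts changes by one equals
`max (1/Y) (X/(Y² − Y))`, which is `1/Y` when `X < Y` and `X/(Y(Y−1))` when `X ≥ Y`. -/
theorem ratio_local_sensitivity (X Y : ℕ) (hX : 2 ≤ X) (hY : 2 ≤ Y) :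
    (max
        (max |(X : ℝ) / (Y : ℝ) - ((X : ℝ) + 1) / (Y : ℝ)|
          |(X : ℝ) / (Y : ℝ) - ((X : ℝ) - 1) / (Y : ℝ)|)
        (max |(X : ℝ) / (Y : ℝ) - (X : ℝ) / ((Y : ℝ) + 1)|
          |(X : ℝ) / (Y : ℝ) - (X : ℝ) / ((Y : ℝ) - 1)|) =
      max (1 / (Y : ℝ)) ((X : ℝ) / ((Y : ℝ) ^ 2 - (Y : ℝ)))) ∧
    (X < Y →
      max
          (max |(X : ℝ) / (Y : ℝ) - ((X : ℝ) + 1) / (Y : ℝ)|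
            |(X : ℝ) / (Y : ℝ) - ((X : ℝ) - 1) / (Y : ℝ)|)
          (max |(X : ℝ) / (Y : ℝ) - (X : ℝ) / ((Y : ℝ) + 1)|
            |(X : ℝ) / (Y : ℝ) - (X : ℝ) / ((Y : ℝ) - 1)|) = 1 / (Y : ℝ)) ∧
    (Y ≤ X →
      max
          (max |(X : ℝ) / (Y : ℝ) - ((X : ℝ) + 1) / (Y : ℝ)|
            |(X : ℝ) / (Y : ℝ) - ((X : ℝ) - 1) / (Y : ℝ)|)
          (max |(X : ℝ) / (Y : ℝ) - (X : ℝ) / ((Y : ℝ) + 1)|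
            |(X : ℝ) / (Y : ℝ) - (X : ℝ) / ((Y : ℝ) - 1)|) =
        (X : ℝ) / ((Y : ℝ) * ((Y : ℝ) - 1))) := by
  have h := ratio_local_sensitivity_general (X : ℝ) (Nat.one_lt_cast.mpr hY)
  rw [Nat.abs_cast] at h
  exact ⟨h.1, fun hlt ↦ h.2.1 (by exact_mod_cast hlt),
    fun hle ↦ h.2.2 (by exact_mod_cast hle.trans X.le_succ)⟩
end

section
/- For natural numbers X' ≥ 1 and Y' ≥ 2, define LS(X', Y') = 1/Y' if X' < Y' and LS(X', Y') = X'/(Y'·(Y'−1)) if X' ≥ Y'. Let n_x, n_y, X, Y, m be natural numbers with 1 ≤ X ≤ n_x, 1 ≤ Y ≤ n_y, m ≥ 1, and Y − m ≥ 2. Then the maximum of LS(X', Y') over all natural numbers X', Y' with 1 ≤ X' ≤ n_x, 1 ≤ Y' ≤ n_y, Y' ≥ 2, and |X − X'| + |Y − Y'| = m equals 1/(Y − m) if X < Y − m, and equals X/((Y − m)·(Y − m − 1)) if X ≥ Y − m. -/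
/-- The local sensitivity of the ratio statistic `X'/Y'` for counts `X' ≥ 1`, `Y' ≥ 2`:
`1/Y'` if `X' < Y'` and `X'/(Y'(Y'−1))` if `X' ≥ Y'`. -/
noncomputable def LS (X' Y' : ℕ) : ℝ :=
  if X' < Y' then 1 / (Y' : ℝ) else (X' : ℝ) / ((Y' : ℝ) * ((Y' : ℝ) - 1))

/-!
On pairs with `Y ≥ 2`, the local sensitivity is `max X (Y - 1) / (Y * (Y - 1))`. It is therefore
monotone in `X`, and it decreases along the diagonal `(X + k, Y + k)`. A pair `(X', Y')` at distance
`m` from `(X, Y)` with `Y' = (Y - m) + k` has spent at least `m - k` of its moves on `Y`, so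
`X' ≤ X + k`, and `LS X' Y' ≤ LS (X + k) (Y - m + k) ≤ LS X (Y - m)`.
-/

theorem LS_eq_max_div (X : ℕ) {Y : ℕ} (hY : 2 ≤ Y) :
    LS X Y = max (X : ℝ) (Y - 1) / (Y * (Y - 1)) := by
  have hY' : (0 : ℝ) < Y - 1 := sub_pos.2 (by exact_mod_cast hY)
  unfold LS
  split_ifs with hXY
  · have hX : (X : ℝ) ≤ Y - 1 := le_sub_iff_add_le.2 (by exact_mod_cast hXY)
    rw [max_eq_right hX, div_mul_cancel_right₀ hY'.ne', one_div]
  · have hX : (Y : ℝ) ≤ X := by exact_mod_cast not_lt.1 hXY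
    rw [max_eq_left (by linarith)]

theorem monotone_LS_left {Y : ℕ} (hY : 2 ≤ Y) : Monotone (LS · Y) := by
  intro X X' hX
  have hY' : (0 : ℝ) < Y - 1 := sub_pos.2 (by exact_mod_cast hY)
  simp only [LS_eq_max_div _ hY]
  gcongr

theorem LS_succ_succ_le (X : ℕ) {Y : ℕ} (hY : 2 ≤ Y) : LS (X + 1) (Y + 1) ≤ LS X Y := by
  have hY' : (0 : ℝ) < Y - 1 := sub_pos.2 (by exact_mod_cast hY)
  have hY₀ : (0 : ℝ) < Y := by linarith
  set M : ℝ := max (X : ℝ) (Y - 1)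
  have hM : (Y : ℝ) - 1 ≤ M := le_max_right _ _
  calc LS (X + 1) (Y + 1) = (M + 1) / ((Y + 1) * Y) := by
        rw [LS_eq_max_div _ (by omega), ← max_add_add_right]
        push_cast
        simp only [sub_add_cancel, add_sub_cancel_right]
    _ ≤ M / (Y * (Y - 1)) := by
        rw [div_le_div_iff₀ (by positivity) (by positivity)]
        have hcross : (M + 1) * (Y - 1) ≤ M * (Y + 1) := by linarith
        linarith [mul_le_mul_of_nonneg_left hcross hY₀.le]
    _ = LS X Y := (LS_eq_max_div X hY).symm

theorem antitone_LS_diagonal (X : ℕ) {Y : ℕ} (hY : 2 ≤ Y) :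
    Antitone fun k ↦ LS (X + k) (Y + k) :=
  antitone_nat_of_succ_le fun k ↦ LS_succ_succ_le (X + k) (Nat.le_add_right_of_le hY)

theorem LS_le_LS_of_le_of_add_le_add {X Y X' Y' : ℕ} (hY : 2 ≤ Y) (hYY' : Y ≤ Y')
    (h : X' + Y ≤ X + Y') : LS X' Y' ≤ LS X Y := by
  obtain ⟨k, rfl⟩ := Nat.exists_eq_add_of_le hYY'
  calc LS X' (Y + k) ≤ LS (X + k) (Y + k) := monotone_LS_left (by omega) (by omega)
    _ ≤ LS X Y := antitone_LS_diagonal X hY k.zero_le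

/-- **Inner maximization in the smooth sensitivity of a ratio of counts.**  The maximum
local sensitivity over all datasets at Hamming distance exactly `m` from `(X, Y)` (one
count changing by one per moved individual, counts staying in range) equals
`1/(Y−m)` if `X < Y−m` and `X/((Y−m)(Y−m−1))` if `X ≥ Y−m`. -/
theorem smooth_sensitivity_inner_max (nx ny X Y m : ℕ)
    (hX1 : 1 ≤ X) (hXn : X ≤ nx) (hY1 : 1 ≤ Y) (hYn : Y ≤ ny)
    (hm : 1 ≤ m) (hYm : m + 2 ≤ Y) :
    IsGreatest
      {v : ℝ | ∃ X' Y' : ℕ,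
        1 ≤ X' ∧ X' ≤ nx ∧ 1 ≤ Y' ∧ Y' ≤ ny ∧ 2 ≤ Y' ∧
        ((X : ℤ) - (X' : ℤ)).natAbs + ((Y : ℤ) - (Y' : ℤ)).natAbs = m ∧
        v = LS X' Y'}
      (if X < Y - m then 1 / ((Y - m : ℕ) : ℝ)
       else (X : ℝ) / (((Y - m : ℕ) : ℝ) * (((Y - m : ℕ) : ℝ) - 1))) := by
  change IsGreatest _ (LS X (Y - m))
  constructor
  · exact ⟨X, Y - m, hX1, hXn, by omega, by omega, by omega, by omega, rfl⟩
  · rintro _ ⟨X', Y', -, -, -, -, -, hdist, rfl⟩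
    have hY' : Y - m ≤ Y' := by omega
    have hX' : X' + (Y - m) ≤ X + Y' := by omega
    exact LS_le_LS_of_le_of_add_le_add (by omega) hY' hX'
end
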